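/- Let G be a discrete group and let ∂_F G be a Furstenberg boundary of G. Then G is C*-simple if and only if the only G-equivariant u.c.p. map Φ : C*_λ(G) → C(∂_F G) is the map given by Φ(a) = τ_λ(a)·1 for all a ∈ C*_λ(G). -/

import Mathlib

noncomputable section
open scoped ENNReal ComplexOrder lp
open MeasureTheory
set_option maxHeartbeats 1000000
set_option synthInstance.maxHeartbeats 1000000

universe u

variable {G : Type u} [Group G]

theorem translat_mem (g : G) (f : ℓ²(G, ℂ)) : Memℓp (fun h => f (g⁻¹ * h)) 2 := by
  have hf : Summable fun i : G => ‖f i‖ ^ (2 : ℝ≥0∞).toReal :=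
    (memℓp_gen_iff (by norm_num)).1 (lp.memℓp f)
  exact memℓp_gen ((Equiv.mulLeft g⁻¹).summable_iff.2 hf)

/-- The left regular representation of `g ∈ G` as a linear isometric bijection of `ℓ²(G)`,
given by `(λ_g ξ)(h) = ξ(g⁻¹ h)`. -/
def lregE (g : G) : ℓ²(G, ℂ) ≃ₗᵢ[ℂ] ℓ²(G, ℂ) :=
{ toFun := fun f => ⟨fun h => f (g⁻¹ * h), translat_mem g f⟩
  invFun := fun f => ⟨fun h => f (g * h), by
    have := translat_mem g⁻¹ f; show Memℓp _ 2; simpa using this⟩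
  map_add' := by intro f₁ f₂; ext h; simp [lp.coeFn_add]; rfl
  map_smul' := by intro c f; ext h; simp [lp.coeFn_smul]
  left_inv := by intro f; ext h; simp
  right_inv := by intro f; ext h; simp
  norm_map' := by
    intro f
    rw [lp.norm_eq_tsum_rpow (by norm_num) f, lp.norm_eq_tsum_rpow (by norm_num)]
    congr 1
    exact (Equiv.mulLeft g⁻¹).tsum_eq (fun h => ‖f h‖ ^ (2 : ℝ≥0∞).toReal) }

/-- The left regular representation `λ` as bounded operators on `ℓ²(G)`. -/
def lreg (g : G) : ℓ²(G, ℂ) →L[ℂ] ℓ²(G, ℂ) :=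
  (lregE g).toContinuousLinearEquiv.toContinuousLinearMap

variable (G) in
/-- The reduced group C*-algebra `C*_λ(G)`: the norm-closed star subalgebra of the algebra of
bounded operators on `ℓ²(G)` generated by the image of the left regular representation. -/
def redCstar : StarSubalgebra ℂ (ℓ²(G, ℂ) →L[ℂ] ℓ²(G, ℂ)) :=
  (StarAlgebra.adjoin ℂ (Set.range (lreg (G := G)))).topologicalClosure

/-- `λ_g` as an element of the reduced group C*-algebra. -/
def uu (g : G) : redCstar G :=
  ⟨lreg g, StarSubalgebra.le_topologicalClosure _ (StarAlgebra.subset_adjoin ℂ _ ⟨g, rfl⟩)⟩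

variable (G) in
/-- `G` is C*-simple: `C*_λ(G)` has no closed two-sided ideals other than `{0}` and the
whole algebra. -/
def IsCstarSimple : Prop :=
  ∀ I : TwoSidedIdeal (redCstar G), IsClosed (I : Set (redCstar G)) → I = ⊥ ∨ I = ⊤

/-- The vector `δ_e ∈ ℓ²(G)`. -/
def deltaOne : ℓ²(G, ℂ) := letI := Classical.decEq G; lp.single 2 (1 : G) 1

variable (G) in
/-- The canonical tracial state `τ_λ(a) = ⟨a δ_e, δ_e⟩` on the reduced C*-algebra
(as a scalar-valued function). -/
def tauF (a : redCstar G) : ℂ :=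
  inner (𝕜 := ℂ) (deltaOne (G := G)) ((a : ℓ²(G, ℂ) →L[ℂ] ℓ²(G, ℂ)) (deltaOne (G := G)))

attribute [irreducible] redCstar lreg lregE deltaOne uu tauF

/-- `X` is a `G`-boundary: a nonempty compact Hausdorff `G`-space such that for every regular
Borel probability measure `μ` on `X` and every `x ∈ X`, the point mass `δ_x` lies in the
weak* closure of the orbit `Gμ`. -/
def IsBoundary (G X : Type*) [Group G] [TopologicalSpace X] [CompactSpace X] [T2Space X]
    [MulAction G X] [ContinuousConstSMul G X] : Prop :=
  Nonempty X ∧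
  letI : MeasurableSpace X := borel X
  haveI : BorelSpace X := ⟨rfl⟩
  ∀ (μ : ProbabilityMeasure X) (x : X),
    (⟨Measure.dirac x, Measure.dirac.isProbabilityMeasure⟩ : ProbabilityMeasure X) ∈
      closure {ν : ProbabilityMeasure X |
        ∃ g : G, ν = μ.map ((continuous_const_smul g).measurable.aemeasurable (μ := μ.toMeasure))
          (f := (g • ·))}

/-- `Y` is a Furstenberg boundary of `G`: a `G`-boundary admitting a continuous `G`-equivariant
surjection onto every `G`-boundary. -/
def IsFurstenberg (G Y : Type u) [Group G] [TopologicalSpace Y] [CompactSpace Y] [T2Space Y]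
    [MulAction G Y] [ContinuousConstSMul G Y] : Prop :=
  IsBoundary G Y ∧
  ∀ (X : Type u) (iT : TopologicalSpace X) (iC : @CompactSpace X iT) (iH : @T2Space X iT)
    (iM : MulAction G X) (iS : @ContinuousConstSMul G X iT iM.toSMul),
    @IsBoundary G X _ iT iC iH iM iS →
      ∃ q : Y → X, @Continuous _ _ _ iT q ∧ Function.Surjective q ∧
        ∀ (g : G) (y : Y), q (g • y) = g • q y

/-- A linear map into `C(Y, ℂ)` is unital completely positive: it is unital and its entrywise
extensions to matrix algebras map positive elements to positive elements. -/
def IsUCP {Y : Type u} [TopologicalSpace Y] (Φ : redCstar G →L[ℂ] C(Y, ℂ)) : Prop :=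
  Φ 1 = 1 ∧ ∀ (n : ℕ) (M : Matrix (Fin n) (Fin n) (redCstar G)),
    (∃ N : Matrix (Fin n) (Fin n) (redCstar G), M = star N * N) →
      ∃ P : Matrix (Fin n) (Fin n) C(Y, ℂ), M.map Φ = star P * P

/-- `G`-equivariance of a map `C*_λ(G) → C(Y)`, for the conjugation action on `C*_λ(G)` and
the translation action on `C(Y)`: `Φ(λ_g a λ_g⁻¹)(y) = Φ(a)(g⁻¹ y)`. -/
def IsEquivariant {Y : Type u} [TopologicalSpace Y] [MulAction G Y]
    (Φ : redCstar G →L[ℂ] C(Y, ℂ)) : Prop :=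
  ∀ (g : G) (a : redCstar G) (y : Y), Φ (uu g * a * uu g⁻¹) y = Φ a (g⁻¹ • y)

set_option linter.unusedSectionVars false

/-! ### Slices around extreme points -/

section Slice

variable {V : Type*} [AddCommGroup V] [Module ℝ V] [TopologicalSpace V]
  [IsTopologicalAddGroup V] [ContinuousSMul ℝ V]

theorem join_avoid {K L M : Set V} (hKc : Convex ℝ K) {x : V} (hx : x ∈ K.extremePoints ℝ)
    (hL : IsCompact L) (hLc : Convex ℝ L) (hLK : L ⊆ K) (hxL : x ∉ L)
    (hM : IsCompact M) (hMc : Convex ℝ M) (hMK : M ⊆ K) (hxM : x ∉ M) :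
    ∃ N : Set V, IsCompact N ∧ Convex ℝ N ∧ N ⊆ K ∧ x ∉ N ∧ L ⊆ N ∧ M ⊆ N := by
  rcases L.eq_empty_or_nonempty with rfl | hLne
  · exact ⟨M, hM, hMc, hMK, hxM, by simp, le_rfl⟩
  rcases M.eq_empty_or_nonempty with rfl | hMne
  · exact ⟨L, hL, hLc, hLK, hxL, le_rfl, by simp⟩
  refine ⟨convexJoin ℝ L M, ?_, hLc.convexJoin hMc, ?_, ?_, ?_, ?_⟩
  · have : convexJoin ℝ L M = (fun p : ℝ × V × V => (1 - p.1) • p.2.1 + p.1 • p.2.2) ''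
        (Set.Icc (0:ℝ) 1 ×ˢ (L ×ˢ M)) := by
      ext z
      simp only [mem_convexJoin, segment_eq_image, Set.mem_image, Set.mem_prod, Prod.exists]
      constructor
      · rintro ⟨a, ha, b, hb, t, ht, rfl⟩
        exact ⟨t, a, b, ⟨ht, ha, hb⟩, rfl⟩
      · rintro ⟨t, a, b, ⟨ht, ha, hb⟩, rfl⟩
        exact ⟨a, ha, b, hb, t, ht, rfl⟩
    rw [this]
    apply (isCompact_Icc.prod (hL.prod hM)).image
    fun_prop
  · exact convexJoin_subset hLK hMK hKc
  · intro h
    rw [mem_convexJoin] at h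
    obtain ⟨a, ha, b, hb, hab⟩ := h
    have := (mem_extremePoints_iff_forall_segment.1 hx).2 a (hLK ha) b (hMK hb) hab
    rcases this with rfl | rfl
    · exact hxL ha
    · exact hxM hb
  · exact subset_convexJoin_left hMne
  · exact subset_convexJoin_right hLne

theorem slice_lemma [LocallyConvexSpace ℝ V] [T2Space V] {K : Set V} (hK : IsCompact K)
    (hKc : Convex ℝ K) {x : V} (hx : x ∈ K.extremePoints ℝ) {W : Set V} (hW : IsOpen W)
    (hxW : x ∈ W) :
    ∃ (l : V →L[ℝ] ℝ) (c : ℝ), (∃ z ∈ K, c < l z) ∧ ∀ z ∈ K, c < l z → z ∈ W := by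
  have key : ∀ t : V, t ≠ x → ∃ l : V →L[ℝ] ℝ, ∃ c, l x < c ∧ c < l t := by
    intro t ht
    obtain ⟨f, hf⟩ := geometric_hahn_banach_point_point (E := V) ht.symm
    exact ⟨f, (f x + f t) / 2, by linarith, by linarith⟩
  choose! l c hlx hlt using key
  have hD : IsCompact (K \ W) := hK.diff hW
  obtain ⟨s, hsD, hs⟩ := hD.elim_nhds_subcover (fun t => {z | c t < l t z}) (by
    intro t ht
    exact (isOpen_lt continuous_const (l t).continuous).mem_nhds
      (hlt t (by rintro rfl; exact ht.2 hxW)))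
  have ind : ∀ s : Finset V, (∀ t ∈ s, t ∈ K \ W) →
      ∃ N : Set V, IsCompact N ∧ Convex ℝ N ∧ N ⊆ K ∧ x ∉ N ∧
        ∀ t ∈ s, K ∩ {z | c t ≤ l t z} ⊆ N := by
    classical
    intro s
    induction s using Finset.induction_on with
    | empty => intro _; exact ⟨∅, isCompact_empty, convex_empty, by simp, by simp, by simp⟩
    | insert a s ha ih =>
      intro h
      obtain ⟨N, h1, h2, h3, h4, h5⟩ := ih (fun t ht => h t (by simp [ht]))
      have haK := h a (by simp)
      have hax : a ≠ x := by rintro rfl; exact haK.2 hxW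
      obtain ⟨N', g1, g2, g3, g4, g5, g6⟩ := join_avoid hKc hx h1 h2 h3 h4
        (M := K ∩ {z | c a ≤ l a z})
        (hK.inter_right (isClosed_le continuous_const (l a).continuous))
        (hKc.inter (convex_halfSpace_ge (l a).toLinearMap.isLinear _)) Set.inter_subset_left
        (by rintro ⟨_, h⟩; exact absurd (hlx a hax) (not_lt.2 h))
      refine ⟨N', g1, g2, g3, g4, ?_⟩
      intro t ht
      rcases Finset.mem_insert.1 ht with rfl | ht
      · exact g6
      · exact (h5 t ht).trans g5
  obtain ⟨N, h1, h2, h3, h4, h5⟩ := ind s hsD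
  obtain ⟨f, u, hf1, hf2⟩ := geometric_hahn_banach_closed_point h2 h1.isClosed h4
  refine ⟨f, u, ⟨x, hx.1, hf2⟩, ?_⟩
  intro z hz hzu
  by_contra hzW
  have := hs ⟨hz, hzW⟩
  simp only [Set.mem_iUnion] at this
  obtain ⟨t, ht, htz⟩ := this
  have hzN : z ∈ N := h5 t ht ⟨hz, by have := htz; simp only [Set.mem_ofPred_eq] at this ⊢; exact this.le⟩
  exact absurd (hf1 z hzN) (not_lt.2 hzu.le)

end Slice


/-! ### The weak dual of a complex normed space -/

section WeakDualFacts

variable {E : Type*} [NormedAddCommGroup E] [NormedSpace ℂ E]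

variable (E) in
/-- The dual of `E` with the weak* topology, as a real topological vector space. -/
def WD : Type _ := WeakDual ℂ E

instance : AddCommGroup (WD E) := inferInstanceAs (AddCommGroup (WeakDual ℂ E))
instance : Module ℝ (WD E) := inferInstanceAs (Module ℝ (WeakDual ℂ E))
instance : Module ℂ (WD E) := inferInstanceAs (Module ℂ (WeakDual ℂ E))
instance : TopologicalSpace (WD E) := inferInstanceAs (TopologicalSpace (WeakDual ℂ E))
instance : FunLike (WD E) E ℂ := inferInstanceAs (FunLike (WeakDual ℂ E) E ℂ)
instance : T2Space (WD E) := inferInstanceAs (T2Space (WeakDual ℂ E))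
instance : IsTopologicalAddGroup (WD E) := inferInstanceAs (IsTopologicalAddGroup (WeakDual ℂ E))
instance : ContinuousLinearMapClass (WD E) ℂ E ℂ :=
  inferInstanceAs (ContinuousLinearMapClass (WeakDual ℂ E) ℂ E ℂ)

/-- View a bounded functional as an element of the weak dual. -/
def WD.of (φ : E →L[ℂ] ℂ) : WD E := StrongDual.toWeakDual φ

/-- View an element of the weak dual as a bounded functional. -/
def WD.to (φ : WD E) : E →L[ℂ] ℂ := WeakDual.toStrongDual φ

@[simp] theorem WD.of_apply (φ : E →L[ℂ] ℂ) (a : E) : WD.of φ a = φ a := rfl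
@[simp] theorem WD.to_apply (φ : WD E) (a : E) : WD.to φ a = φ a := rfl
@[simp] theorem WD.add_apply (φ ψ : WD E) (a : E) : (φ + ψ) a = φ a + ψ a := rfl
@[simp] theorem WD.smul_apply (c : ℝ) (φ : WD E) (a : E) : (c • φ) a = c * φ a := rfl

theorem WD.continuous_eval (a : E) : Continuous fun φ : WD E => φ a := WeakDual.eval_continuous a

theorem WD.continuous_of {X : Type*} [TopologicalSpace X] {f : X → WD E}
    (h : ∀ a, Continuous fun x => f x a) : Continuous f :=
  WeakDual.continuous_of_continuous_eval h

theorem WD.isCompact {K : Set (WD E)} (hK : IsClosed K) {C : ℝ}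
    (hC : ∀ φ ∈ K, ∀ a, ‖φ a‖ ≤ C * ‖a‖) : IsCompact K := by
  have h := WeakDual.isCompact_closedBall (𝕜 := ℂ) (E := E) 0 (max C 0)
  refine IsCompact.of_isClosed_subset h hK ?_
  intro φ hφ
  change WeakDual.toStrongDual φ ∈ Metric.closedBall _ _
  rw [mem_closedBall_zero_iff]
  refine ContinuousLinearMap.opNorm_le_bound _ (le_max_right _ _) fun a => ?_
  exact (hC φ hφ a).trans (by gcongr; exact le_max_left _ _)

instance : ContinuousSMul ℝ (WD E) :=
  ⟨WD.continuous_of fun a => by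
    change Continuous fun p : ℝ × WD E => p.1 • (p.2 a)
    exact continuous_fst.smul ((WD.continuous_eval a).comp continuous_snd)⟩

instance : ContinuousConstSMul ℂ (WD E) :=
  ⟨fun c => WD.continuous_of fun a => by
    change Continuous fun p : WD E => c * (p a)
    exact continuous_const.mul (WD.continuous_eval a)⟩

instance : LocallyConvexSpace ℝ (WD E) :=
  WeakBilin.locallyConvexSpace (B := topDualPairing ℂ E)

theorem real_functional (l : WD E →L[ℝ] ℝ) : ∃ a : E, ∀ φ : WD E, l φ = (φ a).re := by
  let L : WD E →ₗ[ℂ] ℂ :=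
    { toFun := fun φ => (l φ : ℂ) - Complex.I * (l (Complex.I • φ) : ℂ)
      map_add' := by intro x y; simp only [smul_add, map_add]; push_cast; ring
      map_smul' := by
        intro c x
        have h1 : c • x = c.re • x + c.im • (Complex.I • x) := by
          refine DFunLike.ext _ _ fun a => ?_
          change c * x a = (c.re • x a) + (c.im • (Complex.I * x a))
          simp only [Complex.real_smul]
          conv_lhs => rw [← Complex.re_add_im c]
          ring
        have h2 : Complex.I • (c • x) = c.re • (Complex.I • x) - c.im • x := by
          refine DFunLike.ext _ _ fun a => ?_
          change Complex.I * (c * x a) = (c.re • (Complex.I * x a)) - (c.im • (x a))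
          simp only [Complex.real_smul]
          conv_lhs => rw [← Complex.re_add_im c]
          linear_combination (c.im * x a) * Complex.I_mul_I
        rw [h2, h1]
        simp only [map_add, map_sub, map_smul, smul_eq_mul, RingHom.id_apply]
        push_cast
        conv_rhs => rw [← Complex.re_add_im c]
        linear_combination (c.im * l (Complex.I • x)) * Complex.I_mul_I }
  have hL : Continuous L := by
    have : Continuous fun φ : WD E => l (Complex.I • φ) :=
      l.continuous.comp (continuous_const_smul Complex.I)
    exact (Complex.continuous_ofReal.comp l.continuous).sub
      (continuous_const.mul (Complex.continuous_ofReal.comp this))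
  obtain ⟨a, ha⟩ := LinearMap.dualEmbedding_surjective (topDualPairing ℂ E) ⟨L, hL⟩
  refine ⟨a, fun φ => ?_⟩
  have h : φ a = L φ := congrArg (fun f : StrongDual ℂ (WeakBilin (topDualPairing ℂ E)) => f φ) ha
  rw [h]
  change _ = ((l φ : ℂ) - Complex.I * (l (Complex.I • φ) : ℂ)).re
  simp

theorem barycenter_mem {K : Set (WD E)} (hK : IsClosed K) (hKc : Convex ℝ K)
    {C : ℝ} (hC : ∀ φ ∈ K, ∀ a, ‖φ a‖ ≤ C * ‖a‖)
    {X : Type*} [MeasurableSpace X] (μ : Measure X) [IsProbabilityMeasure μ]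
    (z : X → WD E) (hz : ∀ x, z x ∈ K) (hm : ∀ a, Measurable fun x => z x a) :
    ∃ b ∈ K, ∀ a, b a = ∫ x, z x a ∂μ := by
  have hIntegr : ∀ a, Integrable (fun x => z x a) μ := fun a =>
    Integrable.of_bound (hm a).aestronglyMeasurable (C * ‖a‖)
      (Filter.Eventually.of_forall fun x => hC _ (hz x) a)
  let b0 : E →ₗ[ℂ] ℂ :=
    { toFun := fun a => ∫ x, z x a ∂μ
      map_add' := by
        intro a a'
        rw [← integral_add (hIntegr a) (hIntegr a')]
        simp
      map_smul' := by
        intro c a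
        rw [RingHom.id_apply, ← integral_smul]
        simp }
  let b : WD E := WD.of (b0.mkContinuous C (by
    intro a
    change ‖∫ x, z x a ∂μ‖ ≤ _
    refine (norm_integral_le_of_norm_le_const (C := C * ‖a‖)
      (Filter.Eventually.of_forall fun x => hC _ (hz x) a)).trans ?_
    simp))
  refine ⟨b, ?_, fun a => rfl⟩
  by_contra hb
  obtain ⟨f, u, hf1, hf2⟩ := geometric_hahn_banach_closed_point hKc hK hb
  obtain ⟨a, ha⟩ := real_functional f
  have h1 : f b = ∫ x, (z x a).re ∂μ := by
    rw [ha]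
    change (∫ x, z x a ∂μ).re = _
    exact (integral_re (hIntegr a)).symm
  have h2 : ∫ x, (z x a).re ∂μ ≤ ∫ x, u ∂μ := by
    refine integral_mono (hIntegr a).re (integrable_const _) fun x => ?_
    have := hf1 _ (hz x)
    rw [ha] at this
    exact this.le
  simp at h2
  linarith

end WeakDualFacts


/-! ### Minimal convex sets and boundaries -/

section ThmF

variable {E : Type u} [NormedAddCommGroup E] [NormedSpace ℂ E]

/-- The dual action. -/
def actW (ρ : G → E →L[ℂ] E) (g : G) (φ : WD E) : WD E := WD.of ((WD.to φ).comp (ρ g⁻¹))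

@[simp] theorem actW_apply (ρ : G → E →L[ℂ] E) (g : G) (φ : WD E) (a : E) :
    actW ρ g φ a = φ (ρ g⁻¹ a) := rfl

theorem actW_continuous (ρ : G → E →L[ℂ] E) (g : G) : Continuous (actW ρ g) :=
  WD.continuous_of fun a => WD.continuous_eval (ρ g⁻¹ a)

theorem actW_add (ρ : G → E →L[ℂ] E) (g : G) (φ ψ : WD E) :
    actW ρ g (φ + ψ) = actW ρ g φ + actW ρ g ψ := rfl

theorem actW_smul (ρ : G → E →L[ℂ] E) (g : G) (c : ℝ) (φ : WD E) :
    actW ρ g (c • φ) = c • actW ρ g φ := rfl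

theorem WD.ext {φ ψ : WD E} (h : ∀ a, φ a = ψ a) : φ = ψ := DFunLike.ext _ _ h

/-- A closed convex invariant nonempty set. -/
structure IsCCI (ρ : G → E →L[ℂ] E) (K : Set (WD E)) : Prop where
  ne : K.Nonempty
  cl : IsClosed K
  cv : Convex ℝ K
  inv : ∀ g, ∀ φ ∈ K, actW ρ g φ ∈ K

theorem exists_minimal_cci (ρ : G → E →L[ℂ] E) {K : Set (WD E)} (hK : IsCCI ρ K)
    (hc : IsCompact K) :
    ∃ K0 ⊆ K, IsCCI ρ K0 ∧ ∀ K1 ⊆ K0, IsCCI ρ K1 → K1 = K0 := by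
  obtain ⟨m, hmK, hm⟩ := zorn_superset_nonempty {L : Set (WD E) | L ⊆ K ∧ IsCCI ρ L} (by
    intro c hcS hcc hcne
    have hne : Nonempty c := hcne.to_subtype
    refine ⟨⋂₀ c, ⟨?_, ?_, ?_, ?_, ?_⟩, fun s hs => Set.sInter_subset_of_mem hs⟩
    · obtain ⟨s, hs⟩ := hcne
      exact (Set.sInter_subset_of_mem hs).trans (hcS hs).1
    · rw [Set.sInter_eq_iInter]
      refine IsCompact.nonempty_iInter_of_directed_nonempty_isCompact_isClosed _ ?_ ?_ ?_ ?_
      · intro s t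
        rcases hcc.total s.2 t.2 with h | h
        · exact ⟨s, le_rfl, h⟩
        · exact ⟨t, h, le_rfl⟩
      · intro s; exact (hcS s.2).2.ne
      · intro s; exact hc.of_isClosed_subset (hcS s.2).2.cl (hcS s.2).1
      · intro s; exact (hcS s.2).2.cl
    · exact isClosed_sInter fun s hs => (hcS hs).2.cl
    · exact convex_sInter fun s hs => (hcS hs).2.cv
    · intro g φ hφ s hs
      exact (hcS hs).2.inv g φ (hφ s hs)) K ⟨le_rfl, hK⟩
  refine ⟨m, hmK, hm.prop.2, fun K1 hK1 h1 => ?_⟩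
  exact le_antisymm hK1 (hm.le_of_le ⟨hK1.trans hmK, h1⟩ hK1)

theorem extreme_inv (ρ : G → E →L[ℂ] E) (h1 : ρ 1 = ContinuousLinearMap.id ℂ E)
    (hmul : ∀ g h, ρ (g * h) = (ρ g).comp (ρ h)) {K : Set (WD E)} (hK : IsCCI ρ K) (g : G)
    {x : WD E} (hx : x ∈ K.extremePoints ℝ) : actW ρ g x ∈ K.extremePoints ℝ := by
  have hinv : ∀ (g : G) (φ : WD E), actW ρ g⁻¹ (actW ρ g φ) = φ := by
    intro g φ
    refine WD.ext fun a => ?_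
    have := congrArg (fun T => T a) (hmul g⁻¹ g)
    simp [h1] at this
    simp [← this]
  rw [mem_extremePoints] at hx ⊢
  refine ⟨hK.inv g x hx.1, ?_⟩
  intro a ha b hb hab
  have := hx.2 (actW ρ g⁻¹ a) (hK.inv _ _ ha) (actW ρ g⁻¹ b) (hK.inv _ _ hb) (by
    obtain ⟨s, t, hs, ht, hst, h⟩ := hab
    refine ⟨s, t, hs, ht, hst, ?_⟩
    rw [← hinv g x, ← h]
    rfl)
  have h3 : ∀ φ, actW ρ g (actW ρ g⁻¹ φ) = φ := fun φ => by
    have := hinv g⁻¹ φ; rwa [inv_inv] at this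
  constructor
  · rw [← this.1, h3]
  · rw [← this.2, h3]

/-- Concentration of measures near points in the closure of the extreme points. -/
theorem concentrate (ρ : G → E →L[ℂ] E) (h1 : ρ 1 = ContinuousLinearMap.id ℂ E)
    (hmul : ∀ g h, ρ (g * h) = (ρ g).comp (ρ h)) {K : Set (WD E)} (hK : IsCCI ρ K)
    {C : ℝ} (hC : ∀ φ ∈ K, ∀ a, ‖φ a‖ ≤ C * ‖a‖)
    (hmin : ∀ K1 ⊆ K, IsCCI ρ K1 → K1 = K)
    {X : Type*} [MeasurableSpace X] (μ : Measure X) [IsProbabilityMeasure μ]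
    (z : X → WD E) (hz : ∀ x, z x ∈ K) (hm : ∀ a, Measurable fun x => z x a)
    {x : WD E} (hx : x ∈ closure (K.extremePoints ℝ)) {W : Set (WD E)} (hW : IsOpen W)
    (hxW : x ∈ W) {ε : ℝ} (hε : 0 < ε) :
    ∃ g : G, μ.real {y | actW ρ g (z y) ∉ W} ≤ ε := by
  obtain ⟨x', hx'W, hx'⟩ := mem_closure_iff.1 hx W hW hxW
  have hKc : IsCompact K := WD.isCompact hK.cl hC
  obtain ⟨l, c, ⟨z1, hz1, hz1c⟩, hsl⟩ := slice_lemma hKc hK.cv hx' hW hx'W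
  obtain ⟨a, ha⟩ := real_functional l
  obtain ⟨z0, hz0, hmax⟩ := hKc.exists_isMaxOn hK.ne l.continuous.continuousOn
  set M := l z0 with hM
  have hMc : c < M := hz1c.trans_le (hmax hz1)
  obtain ⟨b, hb, hbi⟩ := barycenter_mem hK.cl hK.cv hC μ z hz hm
  have hδ : 0 < ε * (M - c) := mul_pos hε (sub_pos.2 hMc)
  obtain ⟨g, hg⟩ : ∃ g : G, M - ε * (M - c) < (b (ρ g⁻¹ a)).re := by
    by_contra! hcon
    have hK1 : IsCCI ρ {φ ∈ K | ∀ g : G, (φ (ρ g⁻¹ a)).re ≤ M - ε * (M - c)} := by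
      refine ⟨⟨b, hb, hcon⟩, ?_, ?_, ?_⟩
      · have : {φ ∈ K | ∀ g : G, (φ (ρ g⁻¹ a)).re ≤ M - ε * (M - c)} =
            K ∩ ⋂ g : G, {φ : WD E | (φ (ρ g⁻¹ a)).re ≤ M - ε * (M - c)} := by
          ext φ; simp
        rw [this]
        exact hK.cl.inter (isClosed_iInter fun g => isClosed_le
          (Complex.continuous_re.comp (WD.continuous_eval _)) continuous_const)
      · intro φ hφ ψ hψ s t hs ht hst
        refine ⟨hK.cv hφ.1 hψ.1 hs ht hst, fun g => ?_⟩
        have e1 := hφ.2 g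
        have e2 := hψ.2 g
        have : ((s • φ + t • ψ) (ρ g⁻¹ a)).re
            = s * (φ (ρ g⁻¹ a)).re + t * (ψ (ρ g⁻¹ a)).re := by simp
        rw [this]
        calc _ ≤ s * (M - ε * (M - c)) + t * (M - ε * (M - c)) := by gcongr
          _ = _ := by rw [← add_mul, hst, one_mul]
      · intro g φ hφ
        refine ⟨hK.inv g φ hφ.1, fun h => ?_⟩
        have := hφ.2 (h * g)
        rw [mul_inv_rev, hmul] at this
        simpa using this
    have := hmin _ (fun φ hφ => hφ.1) hK1
    rw [← this] at hz0
    have h2 := hz0.2 1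
    rw [inv_one, h1] at h2
    simp only [ContinuousLinearMap.id_apply] at h2
    rw [← ha] at h2
    linarith
  refine ⟨g, ?_⟩
  rw [hbi] at hg
  have hIntegr : ∀ a, Integrable (fun x => z x a) μ := fun a =>
    Integrable.of_bound (hm a).aestronglyMeasurable (C * ‖a‖)
      (Filter.Eventually.of_forall fun x => hC _ (hz x) a)
  have hre : (∫ x, z x (ρ g⁻¹ a) ∂μ).re = ∫ x, (z x (ρ g⁻¹ a)).re ∂μ :=
    (integral_re (hIntegr _)).symm
  rw [hre] at hg
  have hle : ∀ y, (z y (ρ g⁻¹ a)).re ≤ M := fun y => by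
    have := hmax (hK.inv g _ (hz y))
    simp only [Set.mem_ofPred_eq, ha, actW_apply] at this
    rw [hM, ha]
    exact this
  have hint2 : Integrable (fun y => M - (z y (ρ g⁻¹ a)).re) μ :=
    (integrable_const _).sub (hIntegr _).re
  have hmk := mul_meas_ge_le_integral_of_nonneg (μ := μ)
    (f := fun y => M - (z y (ρ g⁻¹ a)).re)
    (Filter.Eventually.of_forall fun y => sub_nonneg.2 (hle y)) hint2 (M - c)
  have hI : ∫ y, (M - (z y (ρ g⁻¹ a)).re) ∂μ < ε * (M - c) := by
    have hre2 : Integrable (fun y => (z y (ρ g⁻¹ a)).re) μ := (hIntegr _).re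
    rw [integral_sub (integrable_const _) hre2]
    simp
    linarith
  have hsub : μ.real {y | actW ρ g (z y) ∉ W} ≤ μ.real {y | M - c ≤ M - (z y (ρ g⁻¹ a)).re} := by
    refine measureReal_mono ?_
    intro y hy
    simp only [Set.mem_ofPred_eq] at hy ⊢
    by_contra hcon
    refine hy (hsl _ (hK.inv g _ (hz y)) ?_)
    rw [ha, actW_apply]
    linarith
  refine hsub.trans ?_
  have h3 := hmk.trans hI.le
  rw [mul_comm ε] at h3
  exact le_of_mul_le_mul_left h3 (sub_pos.2 hMc)

end ThmF


/-! ### The universal property of the Furstenberg boundary for convex sets -/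

theorem boundary_of_concentrate {X : Type*} [TopologicalSpace X] [CompactSpace X]
    [T2Space X] [MulAction G X] [ContinuousConstSMul G X] [Nonempty X]
    (H : letI : MeasurableSpace X := borel X
      ∀ (μ : Measure X) [IsProbabilityMeasure μ] (x : X) (W : Set X), IsOpen W → x ∈ W →
        ∀ ε : ℝ, 0 < ε → ∃ g : G, μ.real {y | g • y ∉ W} ≤ ε) : IsBoundary G X := by
  refine ⟨inferInstance, ?_⟩
  let _ : MeasurableSpace X := borel X
  have : BorelSpace X := ⟨rfl⟩
  intro μ x
  have hch : ∀ p : (TopologicalSpace.OpenNhdsOf x)ᵒᵈ × ℕ, ∃ g : G,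
      (μ : Measure X).real {y | g • y ∉ ((OrderDual.ofDual p.1 : TopologicalSpace.OpenNhdsOf x) : Set X)} ≤ 1 / ((p.2 : ℝ) + 1) :=
    fun p => H (μ : Measure X) x _ (OrderDual.ofDual p.1).isOpen (OrderDual.ofDual p.1).mem _
      (by positivity)
  choose g hg using hch
  refine mem_closure_of_tendsto (X := ProbabilityMeasure X) (b := Filter.atTop) (f := fun p =>
    μ.map ((continuous_const_smul (g p)).measurable.aemeasurable (μ := μ.toMeasure))
          (f := (g p • ·))) ?_ (Filter.Eventually.of_forall fun p => ⟨g p, rfl⟩)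
  refine ProbabilityMeasure.tendsto_iff_forall_integral_tendsto.2 ?_
  intro f
  have hd : ∫ ω, f ω ∂(Measure.dirac x) = f x := integral_dirac' _ _ f.continuous.stronglyMeasurable
  refine Filter.Tendsto.mono_right (y := nhds (f x)) ?_ (le_of_eq (congrArg nhds hd.symm))
  have hmap : ∀ p, ∫ ω, f ω ∂((μ.map ((continuous_const_smul (g p)).measurable.aemeasurable
      (μ := μ.toMeasure)) (f := (g p • ·)) : ProbabilityMeasure X) : Measure X)
      = ∫ ω, f (g p • ω) ∂(μ : Measure X) := fun p => by
    rw [ProbabilityMeasure.toMeasure_map]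
    exact integral_map (continuous_const_smul (g p)).measurable.aemeasurable
      f.continuous.aestronglyMeasurable
  simp only [hmap]
  rw [Metric.tendsto_atTop]
  intro ε hε
  obtain ⟨n, hn⟩ := exists_nat_gt ((2 * ‖f‖ * 2) / ε)
  let W : TopologicalSpace.OpenNhdsOf x := ⟨⟨{y | |f y - f x| < ε / 2}, by
    exact isOpen_lt (by fun_prop) continuous_const⟩, by
      simp [hε]⟩
  refine ⟨(OrderDual.toDual W, n), fun p hp => ?_⟩
  have hpW : ((OrderDual.ofDual p.1 : TopologicalSpace.OpenNhdsOf x) : Set X) ⊆ {y | |f y - f x| < ε / 2} := hp.1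
  have hpn : (n : ℝ) ≤ p.2 := by exact_mod_cast hp.2
  have hsm : MeasurableSet {y | g p • y ∉ ((OrderDual.ofDual p.1 : TopologicalSpace.OpenNhdsOf x) : Set X)} :=
    ((OrderDual.ofDual p.1).isOpen.preimage (continuous_const_smul (g p))).measurableSet.compl
  set A := {y | g p • y ∉ ((OrderDual.ofDual p.1 : TopologicalSpace.OpenNhdsOf x) : Set X)} with hA
  have hfi : Integrable (fun ω => f (g p • ω)) (μ : Measure X) :=
    Integrable.of_bound (f.continuous.comp (continuous_const_smul (g p))).aestronglyMeasurable ‖f‖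
      (Filter.Eventually.of_forall fun y => f.norm_coe_le_norm _)
  have e1 : ∫ ω, f (g p • ω) ∂(μ : Measure X) - f x
      = ∫ ω, (f (g p • ω) - f x) ∂(μ : Measure X) := by
    rw [integral_sub hfi (integrable_const _)]; simp
  have hbd : ∀ y, ‖f (g p • y) - f x‖ ≤ ε / 2 + A.indicator (fun _ => 2 * ‖f‖) y := by
    intro y
    by_cases hy : y ∈ A
    · rw [Set.indicator_of_mem hy]
      have := norm_sub_le (f (g p • y)) (f x)
      have := f.norm_coe_le_norm (g p • y)
      have := f.norm_coe_le_norm x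
      linarith
    · rw [Set.indicator_of_notMem hy, add_zero]
      have : g p • y ∈ ((OrderDual.ofDual p.1 : TopologicalSpace.OpenNhdsOf x) : Set X) := by
        simpa [hA] using hy
      exact (hpW this).le
  have hii : Integrable (A.indicator (fun _ => 2 * ‖f‖)) (μ : Measure X) :=
    (integrable_const _).indicator hsm
  have e2 : ‖∫ ω, (f (g p • ω) - f x) ∂(μ : Measure X)‖ ≤
      ∫ ω, (ε / 2 + A.indicator (fun _ => 2 * ‖f‖) ω) ∂(μ : Measure X) :=
    norm_integral_le_of_norm_le ((integrable_const _).add hii) (Filter.Eventually.of_forall hbd)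
  rw [integral_add (integrable_const _) hii, integral_indicator_const _ hsm] at e2
  simp only [integral_const, probReal_univ, smul_eq_mul, one_mul] at e2
  rw [dist_eq_norm, e1]
  refine e2.trans_lt ?_
  have h5 : (μ : Measure X).real A * (2 * ‖f‖) ≤ 1 / ((n : ℝ) + 1) * (2 * ‖f‖) := by
    refine mul_le_mul_of_nonneg_right ((hg p).trans ?_) (by positivity)
    exact one_div_le_one_div_of_le (by positivity) (by linarith)
  have h6 : 1 / ((n : ℝ) + 1) * (2 * ‖f‖) < ε / 2 := by
    rw [div_lt_iff₀ hε] at hn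
    rw [one_div, inv_mul_lt_iff₀ (by positivity)]
    nlinarith
  linarith

theorem theoremF {E : Type u} [NormedAddCommGroup E] [NormedSpace ℂ E]
    {Y : Type u} [TopologicalSpace Y] [CompactSpace Y] [T2Space Y] [MulAction G Y]
    [ContinuousConstSMul G Y] (hY : IsFurstenberg G Y)
    (ρ : G → E →L[ℂ] E) (h1 : ρ 1 = ContinuousLinearMap.id ℂ E)
    (hmul : ∀ g h, ρ (g * h) = (ρ g).comp (ρ h)) {K : Set (WD E)} (hK : IsCCI ρ K)
    {C : ℝ} (hC : ∀ φ ∈ K, ∀ a, ‖φ a‖ ≤ C * ‖a‖) :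
    ∃ q : Y → WD E, (∀ y, q y ∈ K) ∧ Continuous q ∧ ∀ (g : G) y, q (g • y) = actW ρ g (q y) := by
  obtain ⟨K0, hK0, hK0c, hmin⟩ := exists_minimal_cci ρ hK (WD.isCompact hK.cl hC)
  have hC0 : ∀ φ ∈ K0, ∀ a, ‖φ a‖ ≤ C * ‖a‖ := fun φ hφ => hC φ (hK0 hφ)
  have hK0k : IsCompact K0 := WD.isCompact hK0c.cl hC0
  let X : Set (WD E) := closure (K0.extremePoints ℝ)
  have hXK : X ⊆ K0 := closure_minimal extremePoints_subset hK0c.cl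
  have hXi : ∀ g, ∀ x ∈ X, actW ρ g x ∈ X := by
    intro g x hx
    have := image_closure_subset_closure_image (actW_continuous ρ g) ⟨x, hx, rfl⟩
    refine closure_mono ?_ this
    rintro _ ⟨x, hx, rfl⟩
    exact extreme_inv ρ h1 hmul hK0c g hx
  let iM : MulAction G X :=
    { smul := fun g x => ⟨actW ρ g x, hXi g _ x.2⟩
      one_smul := fun x => by
        refine Subtype.ext (WD.ext fun a => ?_)
        show x.1 (ρ 1⁻¹ a) = x.1 a
        rw [inv_one, h1]; rfl
      mul_smul := fun g h x => by
        refine Subtype.ext (WD.ext fun a => ?_)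
        show x.1 (ρ (g * h)⁻¹ a) = x.1 (ρ h⁻¹ (ρ g⁻¹ a))
        rw [mul_inv_rev, hmul]; rfl }
  have hsm : ∀ (g : G) (x : X), (g • x).1 = actW ρ g x.1 := fun g x => rfl
  let iS : ContinuousConstSMul G X := ⟨fun g => by
    refine Continuous.subtype_mk ((actW_continuous ρ g).comp continuous_subtype_val) _⟩
  have iC : CompactSpace X := isCompact_iff_compactSpace.1
    (hK0k.of_isClosed_subset isClosed_closure hXK)
  have iN : Nonempty X := by
    obtain ⟨x, hx⟩ := hK0k.extremePoints_nonempty hK0c.ne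
    exact ⟨⟨x, subset_closure hx⟩⟩
  have hB : IsBoundary G X := by
    refine boundary_of_concentrate ?_
    let _ : MeasurableSpace X := borel X
    have : BorelSpace X := ⟨rfl⟩
    intro μ _ x W hW hxW ε hε
    obtain ⟨W', hW', rfl⟩ := isOpen_induced_iff.1 hW
    obtain ⟨g, hg⟩ := concentrate ρ h1 hmul hK0c hC0 hmin μ (Subtype.val : X → WD E)
      (fun x => hXK x.2) (fun a => ((WD.continuous_eval a).comp continuous_subtype_val).measurable)
      x.2 hW' hxW hε
    exact ⟨g, hg⟩
  obtain ⟨q, hq, -, hqe⟩ := hY.2 X _ iC _ iM iS hB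
  refine ⟨fun y => (q y).1, fun y => hK0 (hXK (q y).2), continuous_subtype_val.comp hq,
    fun g y => ?_⟩
  exact congrArg Subtype.val (hqe g y)


/-! ### States -/

section States

variable {B : Type*} [CStarAlgebra B]

/-- States, described as contractive unital functionals. -/
structure IsSt (φ : B →L[ℂ] ℂ) : Prop where
  one : φ 1 = 1
  le : ∀ a, ‖φ a‖ ≤ ‖a‖

theorem IsSt.im_eq_zero {φ : B →L[ℂ] ℂ} (h : IsSt φ) {a : B} (ha : IsSelfAdjoint a) :
    (φ a).im = 0 := by
  have key : ∀ t : ℝ, ((φ a).im - t) ^ 2 ≤ ‖a‖ ^ 2 + t ^ 2 := by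
    intro t
    have h1 := h.le (a - ((t : ℂ) * Complex.I) • 1)
    have h2 : ‖a - ((t : ℂ) * Complex.I) • (1 : B)‖ ^ 2 ≤ ‖a‖ ^ 2 + t ^ 2 := by
      rw [sq, ← CStarRing.norm_star_mul_self]
      have : star (a - ((t : ℂ) * Complex.I) • (1 : B)) * (a - ((t : ℂ) * Complex.I) • (1 : B))
          = star a * a + ((t ^ 2 : ℝ) : ℂ) • 1 := by
        have h3 : star ((t : ℂ) * Complex.I) = - ((t : ℂ) * Complex.I) := by simp
        have h4 : ((t ^ 2 : ℝ) : ℂ) = - ((t : ℂ) * Complex.I) * ((t : ℂ) * Complex.I) := by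
          push_cast; linear_combination ((t:ℂ)^2) * Complex.I_sq
        rw [h4]
        simp only [star_sub, star_smul, star_one, ha.star_eq, sub_mul, mul_sub, smul_mul_assoc,
          mul_smul_comm, one_mul, mul_one, h3]
        module
      rw [this]
      refine (norm_add_le _ _).trans ?_
      rw [CStarRing.norm_star_mul_self, ← sq]
      refine add_le_add le_rfl ?_
      rcases subsingleton_or_nontrivial B with hB | hB
      · rw [Subsingleton.elim (((t ^ 2 : ℝ) : ℂ) • (1 : B)) 0]; simp; positivity
      · rw [norm_smul]; simp
    have h3 : ‖φ (a - ((t : ℂ) * Complex.I) • 1)‖ ^ 2 = (φ a).re ^ 2 + ((φ a).im - t) ^ 2 := by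
      rw [map_sub, map_smul, h.one, ← Complex.normSq_eq_norm_sq, Complex.normSq_apply]
      simp; ring
    have h4 : ‖φ (a - ((t : ℂ) * Complex.I) • 1)‖ ^ 2 ≤ ‖a - ((t : ℂ) * Complex.I) • 1‖ ^ 2 := by
      gcongr
    nlinarith [sq_nonneg (φ a).re]
  by_contra hne
  have := key (-(‖a‖ ^ 2 / (φ a).im))
  have e : (φ a).im * (‖a‖ ^ 2 / (φ a).im) = ‖a‖ ^ 2 := by field_simp
  have hpos : 0 < (φ a).im ^ 2 := by positivity
  nlinarith [sq_nonneg ‖a‖]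

theorem IsSt.nonneg {φ : B →L[ℂ] ℂ} (h : IsSt φ) (b : B) : 0 ≤ φ (star b * b) := by
  let _ := CStarAlgebra.spectralOrder B
  have := CStarAlgebra.spectralOrderedRing B
  set a := star b * b with ha
  have hsa : IsSelfAdjoint a := IsSelfAdjoint.star_mul_self b
  have ha0 : 0 ≤ a := star_mul_self_nonneg b
  have hle : a ≤ algebraMap ℝ B ‖a‖ := hsa.le_algebraMap_norm_self
  have h1 : ‖algebraMap ℝ B ‖a‖ - a‖ ≤ ‖a‖ :=
    (CStarAlgebra.norm_le_iff_le_algebraMap _ (norm_nonneg a) (sub_nonneg.2 hle)).2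
      (sub_le_self _ ha0)
  have h2 := (h.le _).trans h1
  have h3 : φ (algebraMap ℝ B ‖a‖ - a) = ‖a‖ - φ a := by
    have : algebraMap ℝ B ‖a‖ = ((‖a‖ : ℝ) : ℂ) • (1 : B) := by
      rw [Algebra.algebraMap_eq_smul_one]; simp
    rw [map_sub, this, map_smul, h.one]; simp
  rw [h3] at h2
  have h4 := (Complex.re_le_norm _).trans h2
  rw [Complex.nonneg_iff]
  refine ⟨?_, (h.im_eq_zero hsa).symm⟩
  simp at h4
  exact h4

/-- Positive unital functionals. -/
theorem isSt_of_pos {φ : B →L[ℂ] ℂ} (h1 : φ 1 = 1) (hp : ∀ b, 0 ≤ φ (star b * b)) : IsSt φ := by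
  refine ⟨h1, fun a => ?_⟩
  have hsum : ∀ c : ℂ, φ (star (a + c • 1) * (a + c • 1))
      = φ (star a * a) + c * φ (star a) + star c * φ a + star c * c := by
    intro c
    simp only [star_add, star_smul, star_one, add_mul, mul_add, smul_mul_assoc, mul_smul_comm,
      one_mul, mul_one, map_add, map_smul, h1, smul_eq_mul]
    ring
  have haa := (Complex.nonneg_iff.1 (hp a)).2
  have hherm : φ (star a) = star (φ a) := by
    have e1 := (Complex.nonneg_iff.1 (hp (a + (1 : ℂ) • 1))).2
    have e2 := (Complex.nonneg_iff.1 (hp (a + Complex.I • 1))).2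
    rw [hsum] at e1 e2
    simp at e1 e2
    apply Complex.ext
    · simp; linarith
    · simp; linarith
  have h2 : ‖φ a‖ ^ 2 ≤ (φ (star a * a)).re := by
    have := (Complex.nonneg_iff.1 (hp (a + (-φ a) • 1))).1
    rw [hsum, hherm] at this
    rw [← Complex.normSq_eq_norm_sq, Complex.normSq_apply]
    simp at this
    linarith
  have h3 : (φ (star a * a)).re ≤ ‖a‖ ^ 2 := by
    let _ := CStarAlgebra.spectralOrder B
    have := CStarAlgebra.spectralOrderedRing B
    have hle : star a * a ≤ algebraMap ℝ B (‖a‖ ^ 2) := CStarAlgebra.star_mul_le_algebraMap_norm_sq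
    obtain ⟨c, hc⟩ := CStarAlgebra.nonneg_iff_eq_star_mul_self.1 (sub_nonneg.2 hle)
    have h4 := hp c
    rw [← hc, map_sub] at h4
    have : algebraMap ℝ B (‖a‖ ^ 2) = (((‖a‖ ^ 2 : ℝ)) : ℂ) • (1 : B) := by
      rw [Algebra.algebraMap_eq_smul_one, Complex.coe_smul]
    rw [this, map_smul, h1] at h4
    have h5 := (Complex.nonneg_iff.1 h4).1
    rw [Complex.sub_re] at h5
    simp only [smul_eq_mul, mul_one, Complex.ofReal_re] at h5
    linarith
  exact le_of_sq_le_sq (h2.trans h3) (norm_nonneg a)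

theorem linear_zero {x y : ℝ} (h : ∀ t : ℝ, 0 ≤ x + t * y) : y = 0 := by
  by_contra hy
  have := h (-(x + 1) / y)
  rw [div_mul_cancel₀ _ hy] at this
  linarith

theorem IsSt.cs_aux {φ : B →L[ℂ] ℂ} (h : IsSt φ) {b : B} (hb : φ (star b * b) = 0) (a : B) :
    φ (star b * a) = 0 ∧ φ (star a * b) = 0 := by
  have key : ∀ c : ℂ, 0 ≤ φ (star a * a) + (star c * φ (star b * a) + c * φ (star a * b)) := by
    intro c
    have := h.nonneg (a + c • b)
    have e : φ (star (a + c • b) * (a + c • b)) =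
        φ (star a * a) + (star c * φ (star b * a) + c * φ (star a * b)) := by
      simp only [star_add, star_smul, add_mul, mul_add, smul_mul_assoc, mul_smul_comm,
        map_add, map_smul, smul_eq_mul, hb]
      ring
    rwa [e] at this
  have ha := (Complex.nonneg_iff.1 (h.nonneg a)).2
  set p := φ (star b * a)
  set q := φ (star a * b)
  have r1 : p.re + q.re = 0 := linear_zero (x := (φ (star a * a)).re) fun t => by
    have := (Complex.nonneg_iff.1 (key t)).1
    simp at this; linarith
  have r2 : p.im - q.im = 0 := linear_zero (x := (φ (star a * a)).re) fun t => by
    have := (Complex.nonneg_iff.1 (key (t * Complex.I))).1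
    simp at this; linarith
  have r3 := (Complex.nonneg_iff.1 (key 1)).2
  have r4 := (Complex.nonneg_iff.1 (key Complex.I)).2
  simp at r3 r4
  constructor <;> apply Complex.ext <;> simp <;> linarith

end States

section Main

theorem instClosedRed : IsClosed (redCstar G : Set (ℓ²(G, ℂ) →L[ℂ] ℓ²(G, ℂ))) := by
  unfold redCstar
  exact StarSubalgebra.isClosed_topologicalClosure _

attribute [local instance] instClosedRed



/-! ### Rigidity of boundaries -/

section Rigidity

variable {Y : Type u} [TopologicalSpace Y] [CompactSpace Y] [T2Space Y] [MulAction G Y]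
    [ContinuousConstSMul G Y]

/-- Real functions as complex functions. -/
def cR (F : C(Y, ℝ)) : C(Y, ℂ) := ⟨fun y => (F y : ℂ), by fun_prop⟩

@[simp] theorem cR_apply (F : C(Y, ℝ)) (y : Y) : cR F y = (F y : ℂ) := rfl

/-- Translation of functions. -/
def trY (g : G) (f : C(Y, ℂ)) : C(Y, ℂ) := ⟨fun y => f (g • y), by fun_prop⟩

@[simp] theorem trY_apply (g : G) (f : C(Y, ℂ)) (y : Y) : trY g f y = f (g • y) := rfl

theorem IsSt.cR_nonneg {Λ : C(Y, ℂ) →L[ℂ] ℂ} (h : IsSt Λ) {F : C(Y, ℝ)} (hF : ∀ y, 0 ≤ F y) :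
    0 ≤ (Λ (cR F)).re := by
  have h1 := h.nonneg (cR ⟨fun y => Real.sqrt (F y), by fun_prop⟩)
  have h2 : star (cR ⟨fun y => Real.sqrt (F y), by fun_prop⟩) *
      (cR ⟨fun y => Real.sqrt (F y), by fun_prop⟩) = cR F := by
    ext y
    have : ((Real.sqrt (F y) : ℝ) : ℂ) * ((Real.sqrt (F y) : ℝ) : ℂ) = ((F y : ℝ) : ℂ) := by
      rw [← Complex.ofReal_mul, Real.mul_self_sqrt (hF y)]
    simpa using this
  rw [h2] at h1
  exact (Complex.nonneg_iff.1 h1).1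

theorem lemmaA (hB : IsBoundary G Y) {Λ : C(Y, ℂ) →L[ℂ] ℂ} (h : IsSt Λ) {F : C(Y, ℝ)}
    {z : Y} (hz : F z = 0) {δ : ℝ} (hδ : 0 < δ) :
    ∃ g : G, (Λ (trY g (cR F))).re < δ := by
  obtain ⟨-, hB⟩ := hB
  let _ : MeasurableSpace Y := borel Y
  have : BorelSpace Y := ⟨rfl⟩
  let L0 : CompactlySupportedContinuousMap Y ℝ →ₗ[ℝ] ℝ :=
    { toFun := fun f => (Λ (cR f.toContinuousMap)).re
      map_add' := fun f g => by
        have : cR (f + g).toContinuousMap = cR f.toContinuousMap + cR g.toContinuousMap := by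
          ext y; simp
        rw [this, map_add, Complex.add_re]
      map_smul' := fun c f => by
        have : cR (c • f).toContinuousMap = (c : ℂ) • cR f.toContinuousMap := by
          ext y; simp
        rw [this, map_smul]; simp }
  let L : CompactlySupportedContinuousMap Y ℝ →ₚ[ℝ] ℝ :=
    PositiveLinearMap.mk₀ L0 fun f hf => h.cR_nonneg hf
  have hL : ∀ f : C(Y, ℝ), ∫ y, f y ∂(RealRMK.rieszMeasure L) = (Λ (cR f)).re := fun f =>
    RealRMK.integral_rieszMeasure L (CompactlySupportedContinuousMap.continuousMapEquiv f)
  have hprob : IsProbabilityMeasure (RealRMK.rieszMeasure L) := by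
    have h1 := hL 1
    have h2 : cR (1 : C(Y, ℝ)) = 1 := by ext y; simp
    rw [h2, h.one] at h1
    simp [Measure.real] at h1
    exact ⟨by rwa [ENNReal.toReal_eq_one_iff] at h1⟩
  let μ : ProbabilityMeasure Y := ⟨RealRMK.rieszMeasure L, hprob⟩
  have hcl := hB μ z
  have ht := ProbabilityMeasure.tendsto_iff_forall_integral_tendsto.1
    (Filter.tendsto_id (α := ProbabilityMeasure Y) (x := nhds (⟨Measure.dirac z, Measure.dirac.isProbabilityMeasure⟩ :
      ProbabilityMeasure Y))) (BoundedContinuousFunction.mkOfCompact F)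
  have hd : ∫ ω, F ω ∂(Measure.dirac z) = F z :=
    integral_dirac' _ _ F.continuous.stronglyMeasurable
  have hev := ht.eventually (gt_mem_nhds (show _ < δ by
    refine lt_of_eq_of_lt ?_ hδ
    exact hd.trans hz))
  obtain ⟨ν, hν, g, rfl⟩ := (((mem_closure_iff_frequently (X := ProbabilityMeasure Y)).1 hcl).and_eventually hev).exists.imp
    fun ν hν => And.intro hν.2 hν.1
  refine ⟨g, ?_⟩
  have e := hL ⟨fun y => F (g • y), by fun_prop⟩
  have e2 : cR (⟨fun y => F (g • y), by fun_prop⟩ : C(Y, ℝ)) = trY g (cR F) := by ext y; rfl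
  rw [e2] at e
  rw [← e]
  refine lt_of_eq_of_lt ?_ hν
  have hm : ∫ y, F y ∂((μ.map ((continuous_const_smul g).measurable.aemeasurable
      (μ := μ.toMeasure)) (f := (g • ·)) : ProbabilityMeasure Y) : Measure Y)
      = ∫ y, F (g • y) ∂(μ : Measure Y) := by
    rw [ProbabilityMeasure.toMeasure_map]
    exact integral_map (continuous_const_smul g).measurable.aemeasurable
      F.continuous.aestronglyMeasurable
  exact hm.symm

theorem lemmaR (hB : IsBoundary G Y) (Λ : Y → C(Y, ℂ) →L[ℂ] ℂ) (hst : ∀ y, IsSt (Λ y))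
    (hc : ∀ f, Continuous fun y => Λ y f)
    (he : ∀ (g : G) y f, Λ (g • y) f = Λ y (trY g f)) (z : Y) (f : C(Y, ℂ)) :
    Λ z f = f z := by
  have key : ∀ F : C(Y, ℝ), (∀ y, 0 ≤ F y) → F z = 0 → (Λ z (cR F)).re ≤ 0 := by
    intro F hF hFz
    by_contra! hpos
    set ε := (Λ z (cR F)).re / 2 with hε
    have hε0 : 0 < ε := by positivity
    let N : Set Y := {y | ε < (Λ y (cR F)).re}
    have hN : IsOpen N := isOpen_lt continuous_const (Complex.continuous_re.comp (hc _))
    have hzN : z ∈ N := by show ε < _; linarith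
    obtain ⟨h, h0, h1, h01⟩ := exists_continuous_zero_one_of_isClosed (s := {z}) (t := Nᶜ)
      isClosed_singleton hN.isClosed_compl (by simpa using hzN)
    let ev : C(Y, ℂ) →L[ℂ] ℂ := ContinuousMap.evalCLM ℂ z
    have hev : ∀ f, ev f = f z := fun f => rfl
    have hΨ : IsSt ((1 / 2 : ℂ) • (ev + Λ z)) := by
      refine ⟨by simp [hev, (hst z).one]; norm_num, fun a => ?_⟩
      have e1 := (hst z).le a
      have e2 : ‖ev a‖ ≤ ‖a‖ := a.norm_coe_le_norm z
      have e3 := norm_add_le (ev a) (Λ z a)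
      simp only [smul_apply, add_apply, smul_eq_mul,
        norm_mul]
      have : ‖(1 / 2 : ℂ)‖ = 1 / 2 := by simp
      rw [this]; linarith
    obtain ⟨g, hg⟩ := lemmaA hB hΨ (F := F + h) (z := z) (by
      simp [hFz, h0 (Set.mem_singleton z)]) (δ := min ε 1 / 2) (by positivity)
    have e1 : trY g (cR (F + h)) = trY g (cR F) + trY g (cR h) := by ext y; simp
    rw [e1] at hg
    simp only [smul_apply, add_apply, map_add, ← he,
      hev, trY_apply, cR_apply, smul_eq_mul] at hg
    have e2 : ((1 / 2 : ℂ) * ((F (g • z) : ℂ) + Λ (g • z) (cR F)) +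
        (1 / 2 : ℂ) * ((h (g • z) : ℂ) + Λ (g • z) (cR h))).re
        = 1 / 2 * (F (g • z) + h (g • z) + ((Λ (g • z) (cR F)).re + (Λ (g • z) (cR h)).re)) := by
      have : (1 / 2 : ℂ) = ((1 / 2 : ℝ) : ℂ) := by simp
      rw [this, Complex.add_re, Complex.re_ofReal_mul, Complex.re_ofReal_mul]; simp; ring
    rw [e2] at hg
    have n1 := hF (g • z)
    have n2 := (h01 (g • z)).1
    have n3 := (hst (g • z)).cR_nonneg hF
    have n4 := (hst (g • z)).cR_nonneg (F := h) (fun y => (h01 y).1)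
    have m1 := min_le_left ε 1
    have m2 := min_le_right ε 1
    have hin : g • z ∈ N := by
      by_contra hnot
      have : h (g • z) = 1 := h1 hnot
      linarith
    have : ε < (Λ (g • z) (cR F)).re := hin
    linarith
  set b : C(Y, ℂ) := f - f z • 1 with hb
  have hbb : star b * b = cR ⟨fun y => Complex.normSq (b y), by fun_prop⟩ := by
    ext y
    simp only [ContinuousMap.mul_apply, ContinuousMap.star_apply, cR_apply, ContinuousMap.coe_mk]
    exact (Complex.normSq_eq_conj_mul_self).symm
  have h1 := (hst z).nonneg b
  have h2 := key ⟨fun y => Complex.normSq (b y), by fun_prop⟩ (fun y => Complex.normSq_nonneg _)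
    (by simp [hb])
  rw [← hbb] at h2
  have h3 : Λ z (star b * b) = 0 := by
    have := Complex.nonneg_iff.1 h1
    exact Complex.ext (le_antisymm h2 this.1) this.2.symm
  have h4 := ((hst z).cs_aux h3 1).2
  simp [hb, (hst z).one, sub_eq_zero] at h4
  exact h4

end Rigidity


/-! ### From states to u.c.p. maps -/

section Sqrt
open scoped Matrix.Norms.L2Operator MatrixOrder

theorem psd_sqrt {Y : Type*} [TopologicalSpace Y] {n : ℕ} (A : Y → Matrix (Fin n) (Fin n) ℂ)
    (hA : Continuous A) (hp : ∀ y, (A y).PosSemidef) :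
    ∃ S : Y → Matrix (Fin n) (Fin n) ℂ, Continuous S ∧ ∀ y, star (S y) * S y = A y := by
  have hn : ∀ y, 0 ≤ A y := fun y => Matrix.nonneg_iff_posSemidef.2 (hp y)
  refine ⟨fun y => CFC.sqrt (A y), ?_, fun y => ?_⟩
  · have h : ContinuousOn CFC.sqrt {a : Matrix (Fin n) (Fin n) ℂ | 0 ≤ a} :=
      CFC.continuousOn_sqrt
    exact h.comp_continuous hA hn
  · have : star (CFC.sqrt (A y)) = CFC.sqrt (A y) :=
      (IsSelfAdjoint.of_nonneg (CFC.sqrt_nonneg (A y))).star_eq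
    rw [this, CFC.sqrt_mul_sqrt_self (A y) (hn y)]

end Sqrt

theorem IsSt.psd {B : Type*} [CStarAlgebra B] {φ : B →L[ℂ] ℂ} (h : IsSt φ) {n : ℕ}
    (N : Matrix (Fin n) (Fin n) B) : ((star N * N).map φ).PosSemidef := by
  have hquad : ∀ x : Fin n → ℂ, star x ⬝ᵥ ((star N * N).map φ).mulVec x =
      ∑ k, φ (star (∑ j, x j • N k j) * (∑ j, x j • N k j)) := by
    intro x
    simp only [dotProduct, Matrix.mulVec, Matrix.map_apply, Matrix.mul_apply, Matrix.star_apply,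
      Pi.star_apply, map_sum, star_sum, Finset.sum_mul, Finset.mul_sum, star_smul,
      smul_mul_assoc, mul_smul_comm, map_smul, smul_eq_mul]
    rw [Finset.sum_comm_cycle]
    refine Finset.sum_congr rfl fun k _ => ?_
    rw [Finset.sum_comm]
    refine Finset.sum_congr rfl fun i _ => Finset.sum_congr rfl fun j _ => ?_
    ring
  have hherm : ∀ a, φ (star a) = star (φ a) := by
    intro a
    have h1 := h.im_eq_zero (IsSelfAdjoint.add_star_self a)
    have h2 := h.im_eq_zero (a := Complex.I • (a - star a)) (by
      rw [IsSelfAdjoint, star_smul]; simp [smul_sub]; abel)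
    rw [map_add] at h1
    rw [map_smul, map_sub] at h2
    simp at h1 h2
    apply Complex.ext
    · simp; linarith
    · simp; linarith
  refine Matrix.PosSemidef.of_dotProduct_mulVec_nonneg ?_ fun x => ?_
  · ext i j
    have : (star N * N) i j = star ((star N * N) j i) := by
      have h0 : star (star N * N) = star N * N := by simp
      rw [← Matrix.star_apply, h0]
    rw [Matrix.conjTranspose_apply, Matrix.map_apply, Matrix.map_apply, this, hherm]
  · rw [hquad]
    exact Finset.sum_nonneg fun k _ => h.nonneg _

theorem isUCP_of_states {Y : Type u} [TopologicalSpace Y] 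
    (Φ : redCstar G →L[ℂ] C(Y, ℂ)) (q : Y → redCstar G →L[ℂ] ℂ) (hq : ∀ y, IsSt (q y))
    (hΦ : ∀ a y, Φ a y = q y a) : IsUCP Φ := by
  refine ⟨by ext y; simp [hΦ, (hq y).one], ?_⟩
  rintro n M ⟨N, rfl⟩
  obtain ⟨S, hS, hSS⟩ := psd_sqrt (fun y => (star N * N).map (q y)) (by
    refine continuous_matrix fun i j => ?_
    simp only [Matrix.map_apply, ← hΦ]
    exact (Φ ((star N * N) i j)).continuous) (fun y => (hq y).psd N)
  refine ⟨Matrix.of fun i j => ⟨fun y => S y i j, by fun_prop⟩, ?_⟩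
  ext i j y
  have := congrFun (congrFun (hSS y) i) j
  simp only [Matrix.map_apply, hΦ] at this ⊢
  rw [← this]
  simp [Matrix.mul_apply, Matrix.star_apply]


/-! ### Operators on `ℓ²` -/

section L2

variable {α : Type u} [MulAction G α]

theorem perm_mem (g : G) (f : ℓ²(α, ℂ)) : Memℓp (fun h => f (g⁻¹ • h)) 2 := by
  have hf : Summable fun i : α => ‖f i‖ ^ (2 : ℝ≥0∞).toReal :=
    (memℓp_gen_iff (by norm_num)).1 (lp.memℓp f)
  exact memℓp_gen ((MulAction.toPerm g⁻¹).summable_iff.2 hf)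

/-- Permutation operators as linear isometries. -/
def permI (g : G) : ℓ²(α, ℂ) →ₗᵢ[ℂ] ℓ²(α, ℂ) :=
{ toFun := fun f => ⟨fun h => f (g⁻¹ • h), perm_mem g f⟩
  map_add' := by intro f₁ f₂; ext h; simp; rfl
  map_smul' := by intro c f; ext h; simp [lp.coeFn_smul]
  norm_map' := by
    intro f
    rw [lp.norm_eq_tsum_rpow (by norm_num) f, lp.norm_eq_tsum_rpow (by norm_num)]
    congr 1
    exact (MulAction.toPerm g⁻¹).tsum_eq (fun h => ‖f h‖ ^ (2 : ℝ≥0∞).toReal) }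

/-- Permutation operators. -/
def perm (g : G) : ℓ²(α, ℂ) →L[ℂ] ℓ²(α, ℂ) := (permI g).toContinuousLinearMap

theorem perm_apply (g : G) (f : ℓ²(α, ℂ)) (x : α) : perm g f x = f (g⁻¹ • x) := rfl

/-- Unitary representations in a C*-algebra. -/
structure URep {B : Type*} [CStarAlgebra B] (U : G → B) : Prop where
  one : U 1 = 1
  mul : ∀ g h, U (g * h) = U g * U h
  star : ∀ g, star (U g) = U g⁻¹

theorem perm_urep : URep (G := G) (perm (α := α)) := by
  have hmul : ∀ g h : G, perm (α := α) (g * h) = perm g * perm h := by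
    intro g h; ext f x
    show f ((g * h)⁻¹ • x) = f (h⁻¹ • g⁻¹ • x)
    rw [mul_inv_rev, mul_smul]
  have hone : perm (α := α) (1 : G) = 1 := by
    ext f x
    show f ((1 : G)⁻¹ • x) = f x
    simp
  refine ⟨hone, hmul, fun g => ?_⟩
  rw [ContinuousLinearMap.star_eq_adjoint]
  symm
  rw [ContinuousLinearMap.eq_adjoint_iff]
  intro x y
  have h1 : perm g (perm g⁻¹ x) = x := by
    show (perm g * perm g⁻¹ : ℓ²(α, ℂ) →L[ℂ] ℓ²(α, ℂ)) x = x
    rw [← hmul, mul_inv_cancel, hone]; rfl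
  conv_rhs => rw [← h1]
  exact ((permI g).inner_map_map _ _).symm

theorem mulop_bound (F : α → ℂ) {C : ℝ} (hC : 0 ≤ C) (hF : ∀ x, ‖F x‖ ≤ C) (f : ℓ²(α, ℂ)) :
    ∃ h : Memℓp (fun x => F x * f x) 2, ‖(⟨_, h⟩ : ℓ²(α, ℂ))‖ ≤ C * ‖f‖ := by
  have hp : 0 < (2 : ℝ≥0∞).toReal := by norm_num
  have hf : Summable fun i : α => ‖f i‖ ^ (2 : ℝ≥0∞).toReal :=
    (memℓp_gen_iff hp).1 (lp.memℓp f)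
  have hle : ∀ i, ‖F i * f i‖ ^ (2 : ℝ≥0∞).toReal ≤
      C ^ (2 : ℝ≥0∞).toReal * ‖f i‖ ^ (2 : ℝ≥0∞).toReal := by
    intro i
    rw [← Real.mul_rpow hC (norm_nonneg _), norm_mul]
    gcongr
    exact hF i
  have hs : Summable fun i : α => ‖F i * f i‖ ^ (2 : ℝ≥0∞).toReal :=
    Summable.of_nonneg_of_le (fun i => by positivity) hle (hf.mul_left _)
  refine ⟨memℓp_gen hs, ?_⟩
  refine (Real.rpow_le_rpow_iff (norm_nonneg _) (by positivity) hp).1 ?_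
  rw [Real.mul_rpow hC (norm_nonneg _), lp.norm_rpow_eq_tsum hp, lp.norm_rpow_eq_tsum hp,
    ← tsum_mul_left]
  exact hs.tsum_le_tsum hle (hf.mul_left _)

/-- Multiplication operators by bounded functions. -/
def mulop (F : α → ℂ) (C : ℝ) (hC : 0 ≤ C) (hF : ∀ x, ‖F x‖ ≤ C) : ℓ²(α, ℂ) →L[ℂ] ℓ²(α, ℂ) :=
  LinearMap.mkContinuous
    { toFun := fun f => ⟨fun x => F x * f x, (mulop_bound F hC hF f).1⟩
      map_add' := fun f g => by
        ext x; show F x * (f x + g x) = F x * f x + F x * g x; ring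
      map_smul' := fun c f => by
        ext x; show F x * (c * f x) = c * (F x * f x); ring } C
    fun f => (mulop_bound F hC hF f).2

theorem mulop_apply (F : α → ℂ) (C : ℝ) (hC : 0 ≤ C) (hF : ∀ x, ‖F x‖ ≤ C) (f : ℓ²(α, ℂ)) (x : α) :
    mulop F C hC hF f x = F x * f x := rfl

theorem mulop_norm (F : α → ℂ) (C : ℝ) (hC : 0 ≤ C) (hF : ∀ x, ‖F x‖ ≤ C) :
    ‖mulop F C hC hF‖ ≤ C := LinearMap.mkContinuous_norm_le _ hC _

theorem mulop_star (F : α → ℂ) (C : ℝ) (hC : 0 ≤ C) (hF : ∀ x, ‖F x‖ ≤ C) :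
    star (mulop F C hC hF) = mulop (fun x => star (F x)) C hC (fun x => by simpa using hF x) := by
  rw [ContinuousLinearMap.star_eq_adjoint]
  symm
  rw [ContinuousLinearMap.eq_adjoint_iff]
  intro x y
  rw [lp.inner_eq_tsum, lp.inner_eq_tsum]
  refine tsum_congr fun i => ?_
  simp only [mulop_apply, RCLike.inner_apply]
  simp
  ring

/-- Multiplication by a continuous function along a map. -/
def mulY {Y : Type u} [TopologicalSpace Y] [CompactSpace Y] (j : α → Y) :
    C(Y, ℂ) →L[ℂ] (ℓ²(α, ℂ) →L[ℂ] ℓ²(α, ℂ)) :=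
  LinearMap.mkContinuous
    { toFun := fun f => mulop (fun x => f (j x)) ‖f‖ (norm_nonneg _) (fun x => f.norm_coe_le_norm _)
      map_add' := fun f g => by
        ext v x
        show (f (j x) + g (j x)) * v x = f (j x) * v x + g (j x) * v x
        ring
      map_smul' := fun c f => by
        ext v x
        show (c * f (j x)) * v x = c * (f (j x) * v x)
        ring } 1
    fun f => by rw [one_mul]; exact mulop_norm (fun x => f (j x)) ‖f‖ (norm_nonneg _) (fun x => f.norm_coe_le_norm _)

section
variable {Y : Type u} [TopologicalSpace Y] [CompactSpace Y] (j : α → Y)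

theorem mulY_apply (f : C(Y, ℂ)) (v : ℓ²(α, ℂ)) (x : α) : mulY j f v x = f (j x) * v x := rfl

theorem mulY_norm (f : C(Y, ℂ)) : ‖mulY j f‖ ≤ ‖f‖ := mulop_norm (fun x => f (j x)) ‖f‖ (norm_nonneg _) (fun x => f.norm_coe_le_norm _)

theorem mulY_one : mulY j (1 : C(Y, ℂ)) = 1 := by
  ext v x; rw [mulY_apply]; simp

theorem mulY_mul (f g : C(Y, ℂ)) : mulY j (f * g) = mulY j f * mulY j g := by
  ext v x
  show (f (j x) * g (j x)) * v x = f (j x) * (g (j x) * v x)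
  ring

theorem mulY_star (f : C(Y, ℂ)) : star (mulY j f) = mulY j (star f) := by
  refine (mulop_star (fun x => f (j x)) ‖f‖ (norm_nonneg _) (fun x => f.norm_coe_le_norm _)).trans ?_
  ext v x; rfl

theorem mulY_conj [MulAction G Y] [ContinuousConstSMul G Y] (hj : ∀ (g : G) x, j (g • x) = g • j x)
    (g : G) (f : C(Y, ℂ)) :
    perm g * mulY j f * perm g⁻¹ = mulY j (trY g⁻¹ f) := by
  ext v x
  show f (j (g⁻¹ • x)) * v (g⁻¹⁻¹ • g⁻¹ • x) = f (g⁻¹ • j x) * v x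
  rw [hj, inv_inv, smul_inv_smul]
end

theorem op_eq_zero {H : Type*} [NormedAddCommGroup H] [NormedSpace ℂ H] [DecidableEq α]
    (T : ℓ²(α, ℂ) →L[ℂ] H) (h : ∀ x, T (lp.single 2 x 1) = 0) : T = 0 := by
  ext v
  have h1 := (lp.hasSum_single (by norm_num) v).mapL T
  have h2 : ∀ x, T (lp.single 2 x (v x)) = 0 := fun x => by
    have : (lp.single 2 x (v x) : ℓ²(α, ℂ)) = v x • lp.single 2 x 1 := by
      rw [← lp.single_smul]; simp
    rw [this, map_smul, h, smul_zero]
  simp only [h2] at h1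
  simpa using h1.unique hasSum_zero
end L2

/-! ### The reduced group C*-algebra -/

theorem lreg_eq_perm (g : G) : lreg g = perm (α := G) g := by
  ext f x
  unfold lreg lregE
  rfl

theorem uu_coe (g : G) : (uu g : ℓ²(G, ℂ) →L[ℂ] ℓ²(G, ℂ)) = perm (α := G) g := by
  rw [← lreg_eq_perm]; unfold uu; rfl

theorem uu_urep : URep (G := G) (uu (G := G)) := by
  have h := perm_urep (G := G) (α := G)
  refine ⟨Subtype.ext ?_, fun g k => Subtype.ext ?_, fun g => Subtype.ext ?_⟩
  · rw [uu_coe, h.one]; rfl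
  · rw [uu_coe, h.mul, ← uu_coe, ← uu_coe]; rfl
  · rw [uu_coe, ← h.star, ← uu_coe]; rfl

section Conj
variable {B : Type u} [CStarAlgebra B] {U : G → B}

theorem URep.norm_le (hU : URep U) (g : G) : ‖U g‖ ≤ 1 := by
  have h1 : ‖U g‖ * ‖U g‖ = ‖(1 : B)‖ := by
    rw [← CStarRing.norm_star_mul_self, hU.star, ← hU.mul, inv_mul_cancel, hU.one]
  have h2 : ‖(1 : B)‖ ≤ 1 := by
    rcases subsingleton_or_nontrivial B with hB | hB
    · rw [Subsingleton.elim (1 : B) 0]; simp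
    · simp
  nlinarith [norm_nonneg (U g)]

/-- Conjugation. -/
def conjU (U : G → B) (g : G) : B →L[ℂ] B :=
  (ContinuousLinearMap.mul ℂ B (U g)).comp ((ContinuousLinearMap.mul ℂ B).flip (U g⁻¹))

theorem conjU_apply (g : G) (a : B) : conjU U g a = U g * a * U g⁻¹ := by
  simp [conjU, mul_assoc]

theorem URep.conj_norm (hU : URep U) (g : G) (a : B) : ‖conjU U g a‖ ≤ ‖a‖ := by
  rw [conjU_apply]
  calc _ ≤ ‖U g‖ * ‖a‖ * ‖U g⁻¹‖ := (norm_mul_le _ _).trans (by gcongr; exact norm_mul_le _ _)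
    _ ≤ 1 * ‖a‖ * 1 := by
      gcongr
      · exact hU.norm_le g
      · exact hU.norm_le _
    _ = ‖a‖ := by ring

theorem URep.conj_one (hU : URep U) (g : G) : conjU U g 1 = 1 := by
  rw [conjU_apply, mul_one, ← hU.mul, mul_inv_cancel, hU.one]

theorem URep.conj_id (hU : URep U) : conjU U 1 = ContinuousLinearMap.id ℂ B := by
  ext a; rw [conjU_apply]; simp [hU.one]

theorem URep.conj_mul (hU : URep U) (g h : G) : conjU U (g * h) = (conjU U g).comp (conjU U h) := by
  ext a; simp only [conjU_apply, ContinuousLinearMap.comp_apply]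
  rw [mul_inv_rev, hU.mul, hU.mul]; simp [mul_assoc]

theorem stateField {Y : Type u} [TopologicalSpace Y] [CompactSpace Y] [T2Space Y] [MulAction G Y]
    [ContinuousConstSMul G Y] (hY : IsFurstenberg G Y) (hU : URep U) (S : Set B)
    (hS : ∀ g, ∀ a ∈ S, conjU U g a ∈ S) (φ0 : B →L[ℂ] ℂ) (h0 : IsSt φ0)
    (h0S : ∀ a ∈ S, φ0 a = 0) :
    ∃ q : Y → B →L[ℂ] ℂ, (∀ y, IsSt (q y)) ∧ (∀ y, ∀ a ∈ S, q y a = 0) ∧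
      (∀ a, Continuous fun y => q y a) ∧ ∀ (g : G) y a, q (g • y) a = q y (conjU U g⁻¹ a) := by
  let K : Set (WD B) := {φ | φ 1 = 1 ∧ (∀ a, ‖φ a‖ ≤ ‖a‖) ∧ ∀ a ∈ S, φ a = 0}
  have hK : IsCCI (conjU U) K := by
    refine ⟨⟨WD.of φ0, h0.one, h0.le, h0S⟩, ?_, ?_, ?_⟩
    · have : K = {φ | φ 1 = 1} ∩ ((⋂ a, {φ | ‖φ a‖ ≤ ‖a‖}) ∩ ⋂ a ∈ S, {φ | φ a = 0}) := by
        ext φ; simp [K]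
      rw [this]
      refine (isClosed_eq (WD.continuous_eval _) continuous_const).inter
        ((isClosed_iInter fun a => isClosed_le (WD.continuous_eval a).norm continuous_const).inter
          (isClosed_biInter fun a _ => isClosed_eq (WD.continuous_eval _) continuous_const))
    · intro φ hφ ψ hψ s t hs ht hst
      refine ⟨?_, fun a => ?_, fun a ha => ?_⟩
      · simp only [WD.add_apply, WD.smul_apply, hφ.1, hψ.1, mul_one]
        exact_mod_cast hst
      · simp only [WD.add_apply, WD.smul_apply]
        refine (norm_add_le _ _).trans ?_
        rw [norm_mul, norm_mul, Complex.norm_of_nonneg hs, Complex.norm_of_nonneg ht]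
        calc _ ≤ s * ‖a‖ + t * ‖a‖ := by gcongr; exacts [hφ.2.1 a, hψ.2.1 a]
          _ = ‖a‖ := by rw [← add_mul, hst, one_mul]
      · simp only [WD.add_apply, WD.smul_apply, hφ.2.2 a ha, hψ.2.2 a ha, mul_zero, add_zero]
    · intro g φ hφ
      refine ⟨?_, fun a => ?_, fun a ha => ?_⟩
      · rw [actW_apply, hU.conj_one, hφ.1]
      · exact (hφ.2.1 _).trans (hU.conj_norm _ _)
      · exact hφ.2.2 _ (hS _ _ ha)
  obtain ⟨q, hq, hqc, hqe⟩ := theoremF hY (conjU U) hU.conj_id hU.conj_mul hK (C := 1)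
    (fun φ hφ a => by rw [one_mul]; exact hφ.2.1 a)
  refine ⟨fun y => WD.to (q y), fun y => ⟨(hq y).1, (hq y).2.1⟩, fun y => (hq y).2.2,
    fun a => (WD.continuous_eval a).comp hqc, fun g y a => ?_⟩
  show q (g • y) a = _
  rw [hqe]; rfl

end Conj



/-! ### From uniqueness of the u.c.p. map to simplicity -/

theorem ideal_state {B : Type u} [CStarAlgebra B] (I : TwoSidedIdeal B) (hI : I ≠ ⊤) :
    ∃ φ : B →L[ℂ] ℂ, IsSt φ ∧ ∀ a ∈ I, φ a = 0 := by
  have h1 : (1 : B) ∉ I := fun h => hI ((TwoSidedIdeal.one_mem_iff I).1 h)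
  have hnt : Nontrivial B := ⟨1, 0, fun h => h1 (h ▸ I.zero_mem)⟩
  let M : Submodule ℂ B :=
    { carrier := {a | a ∈ I}
      add_mem' := fun ha hb => I.add_mem ha hb
      zero_mem' := I.zero_mem
      smul_mem' := fun c a ha => by
        have := I.mul_mem_left (c • 1) a ha
        simpa using this }
  have hdist : ∀ a ∈ I, 1 ≤ ‖(1 : B) - a‖ := by
    intro a ha
    by_contra! hlt
    obtain ⟨v, hv⟩ : ∃ v : Bˣ, (v : B) = a := ⟨Units.oneSub (1 - a) hlt, by simp⟩
    apply h1
    have := I.mul_mem_left ((v⁻¹ : Bˣ) : B) a ha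
    rw [← hv] at this
    simpa using this
  have hnorm : ‖(M.mkQ 1)‖ = 1 := by
    refine le_antisymm ((Submodule.Quotient.norm_mk_le M 1).trans (by simp)) ?_
    show 1 ≤ ‖((1 : B) : B ⧸ M.toAddSubgroup)‖
    rw [QuotientAddGroup.norm_mk]
    refine (Metric.le_infDist ⟨0, M.zero_mem⟩).2 fun a ha => ?_
    rw [dist_eq_norm]; exact hdist a ha
  obtain ⟨f, hf1, hf2⟩ := exists_dual_vector'' ℂ (M.mkQ 1)
  have hle : ∀ a : B, ‖f (M.mkQ a)‖ ≤ 1 * ‖a‖ := fun a => by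
    refine (f.le_opNorm _).trans ?_
    gcongr
    exact Submodule.Quotient.norm_mk_le M a
  refine ⟨LinearMap.mkContinuous (f.toLinearMap.comp M.mkQ) 1 hle, ⟨?_, fun a => ?_⟩, fun a ha => ?_⟩
  · show f (M.mkQ 1) = 1
    rw [hf2, hnorm]; simp
  · exact (hle a).trans (by rw [one_mul])
  · show f (M.mkQ a) = 0
    rw [(Submodule.Quotient.mk_eq_zero M).2 (show a ∈ M from ha) |> fun h => (h : M.mkQ a = 0)]
    simp

theorem tauF_star_mul (a : redCstar G) :
    tauF G (star a * a) = ((‖(a : ℓ²(G, ℂ) →L[ℂ] ℓ²(G, ℂ)) deltaOne‖ : ℂ)) ^ 2 := by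
  unfold tauF
  refine Eq.trans ?_ (inner_self_eq_norm_sq_to_K (𝕜 := ℂ)
    ((a : ℓ²(G, ℂ) →L[ℂ] ℓ²(G, ℂ)) (deltaOne (G := G))))
  show inner ℂ _ ((star (a : ℓ²(G, ℂ) →L[ℂ] ℓ²(G, ℂ))) ((a : ℓ²(G, ℂ) →L[ℂ] ℓ²(G, ℂ)) deltaOne)) = _
  rw [ContinuousLinearMap.star_eq_adjoint, ContinuousLinearMap.adjoint_inner_right]

theorem perm_single {α : Type u} [MulAction G α] [DecidableEq α] (g : G) (x : α) (c : ℂ) :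
    perm g (lp.single 2 x c : ℓ²(α, ℂ)) = lp.single 2 (g • x) c := by
  ext z
  rw [perm_apply]
  simp only [lp.coeFn_single]
  by_cases h : z = g • x
  · subst h; simp
  · rw [Pi.single_eq_of_ne h, Pi.single_eq_of_ne]
    rintro rfl; simp at h

theorem simple_of_unique {Y : Type u} [TopologicalSpace Y] [CompactSpace Y] [T2Space Y]
    [MulAction G Y] [ContinuousConstSMul G Y] (hY : IsFurstenberg G Y)
    (hu : ∀ Φ : redCstar G →L[ℂ] C(Y, ℂ), IsUCP Φ → IsEquivariant Φ →
        ∀ (a : redCstar G) (x : Y), Φ a x = tauF G a) : IsCstarSimple G := by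
  classical
  intro I _
  by_cases hI : I = ⊤
  · exact Or.inr hI
  left
  obtain ⟨φ, hφ, hφI⟩ := ideal_state I hI
  obtain ⟨q, hq, hqI, hqc, hqe⟩ := stateField hY (uu_urep (G := G)) {a | a ∈ I}
    (fun g a ha => by
      rw [conjU_apply]
      exact I.mul_mem_right _ _ (I.mul_mem_left _ _ ha)) φ hφ hφI
  let Φ : redCstar G →L[ℂ] C(Y, ℂ) := LinearMap.mkContinuous
    { toFun := fun a => ⟨fun y => q y a, hqc a⟩
      map_add' := fun a b => by ext y; simp
      map_smul' := fun c a => by ext y; simp } 1 (fun a =>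
        ((ContinuousMap.norm_le _ (norm_nonneg a)).2 fun y => (hq y).le a).trans (one_mul ‖a‖).ge)
  have hval : ∀ a y, Φ a y = q y a := fun a y => rfl
  have key := hu Φ (isUCP_of_states Φ q hq hval) (fun g a y => by
    have e1 : q (g⁻¹ • y) a = q y (conjU uu g a) := by rw [hqe, inv_inv]
    refine Eq.trans ?_ e1.symm
    exact congrArg (q y) (conjU_apply g a).symm)
  obtain ⟨y⟩ := hY.1.1
  rw [eq_bot_iff]
  intro a ha
  rw [TwoSidedIdeal.mem_bot]
  apply Subtype.ext
  refine op_eq_zero _ fun g => ?_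
  have h1 : a * uu g ∈ I := I.mul_mem_right _ _ ha
  have h2 : tauF G (star (a * uu g) * (a * uu g)) = 0 := by
    rw [← key _ y, hval]
    exact hqI y _ (I.mul_mem_left _ _ h1)
  rw [tauF_star_mul] at h2
  have h3 : ((a * uu g : redCstar G) : ℓ²(G, ℂ) →L[ℂ] ℓ²(G, ℂ)) deltaOne = 0 := by simpa using h2
  have h4 : ((a * uu g : redCstar G) : ℓ²(G, ℂ) →L[ℂ] ℓ²(G, ℂ)) =
      (a : ℓ²(G, ℂ) →L[ℂ] ℓ²(G, ℂ)) * perm g := by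
    rw [← uu_coe]; rfl
  rw [h4] at h3
  have h5 : perm g (deltaOne : ℓ²(G, ℂ)) = lp.single 2 g 1 := by
    unfold deltaOne
    have : Classical.decEq G = (fun a b => Classical.propDecidable (a = b)) := Subsingleton.elim _ _
    rw [this, perm_single]; simp
  rw [← h5]
  exact h3


/-! ### Extending an equivariant u.c.p. map to `B(ℓ² G)` -/

theorem ext_fun {B : Type*} [NormedAddCommGroup B] [NormedSpace ℂ B] (p : Submodule ℂ B)
    (f : p →ₗ[ℂ] ℂ) (hf : ∀ a, ‖f a‖ ≤ ‖a‖) :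
    ∃ F : B →L[ℂ] ℂ, (∀ a, ‖F a‖ ≤ ‖a‖) ∧ ∀ a : p, F a = f a := by
  obtain ⟨F, hF, hFn⟩ := exists_extension_norm_eq p
    (f.mkContinuous 1 (fun a => by rw [one_mul]; exact hf a))
  refine ⟨F, fun a => ?_, hF⟩
  refine (F.le_opNorm a).trans ?_
  rw [hFn]
  calc _ ≤ 1 * ‖a‖ := by
        gcongr
        exact LinearMap.mkContinuous_norm_le _ zero_le_one _
    _ = ‖a‖ := one_mul _

section A

variable {Y : Type u} [TopologicalSpace Y] [CompactSpace Y]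

theorem IsUCP.isSt {Φ : redCstar G →L[ℂ] C(Y, ℂ)} (h : IsUCP Φ) (y : Y) :
    IsSt ((ContinuousMap.evalCLM ℂ y).comp Φ) := by
  refine isSt_of_pos ?_ fun b => ?_
  · show Φ 1 y = 1
    rw [h.1]; rfl
  · show 0 ≤ Φ (star b * b) y
    obtain ⟨P, hP⟩ := h.2 1 (star (Matrix.of fun _ _ => b) * (Matrix.of fun _ _ => b)) ⟨_, rfl⟩
    have h1 := congrFun (congrFun hP 0) 0
    have h2 : Φ (star b * b) = star (P 0 0) * P 0 0 := by
      simpa [Matrix.mul_apply, Matrix.star_apply] using h1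
    rw [h2]
    exact star_mul_self_nonneg (P 0 0 y)

variable [MulAction G Y] [ContinuousConstSMul G Y]

theorem trY_norm (g : G) (f : C(Y, ℂ)) : ‖trY g f‖ ≤ ‖f‖ :=
  (ContinuousMap.norm_le _ (norm_nonneg f)).2 fun _ => f.norm_coe_le_norm _

/-- Translation as a linear map. -/
def trLin (g : G) : C(Y, ℂ) →ₗ[ℂ] C(Y, ℂ) where
  toFun := trY g
  map_add' := fun _ _ => rfl
  map_smul' := fun _ _ => rfl

/-- Translation as a continuous linear map. -/
def trL (g : G) : C(Y, ℂ) →L[ℂ] C(Y, ℂ) := 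
  ⟨trLin g, ContinuousMap.continuous_precomp (⟨fun y => g • y, by fun_prop⟩ : C(Y, Y))⟩

theorem trL_apply (g : G) (f : C(Y, ℂ)) : trL g f = trY g f := rfl

theorem extA [T2Space Y] (hY : IsFurstenberg G Y) {Φ : redCstar G →L[ℂ] C(Y, ℂ)} (hΦ : IsUCP Φ)
    (hE : IsEquivariant Φ) :
    ∃ ψ : Y → (ℓ²(G, ℂ) →L[ℂ] ℓ²(G, ℂ)) →L[ℂ] ℂ, (∀ y, IsSt (ψ y)) ∧
      (∀ (a : redCstar G) y, ψ y a = Φ a y) ∧ (∀ a, Continuous fun y => ψ y a) ∧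
      ∀ (g : G) y a, ψ (g • y) a = ψ y (conjU perm g⁻¹ a) := by
  have hP := perm_urep (G := G) (α := G)
  let B := ℓ²(G, ℂ) →L[ℂ] ℓ²(G, ℂ)
  let ρ : G → (B × C(Y, ℂ)) →L[ℂ] (B × C(Y, ℂ)) := fun g =>
    (conjU perm g).prodMap (trL g⁻¹)
  let K : Set (WD (B × C(Y, ℂ))) := {F | F (1, 0) = 1 ∧ F (0, 1) = 1 ∧ (∀ b : B, ‖F (b, 0)‖ ≤ ‖b‖) ∧
    (∀ f : C(Y, ℂ), ‖F (0, f)‖ ≤ ‖f‖) ∧ ∀ a : redCstar G, F ((a : B), 0) = F (0, Φ a)}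
  have hρ : ∀ g b f, ρ g (b, f) = (conjU perm g b, trY g⁻¹ f) := fun g b f => rfl
  have hconv : ∀ (s t : ℝ), 0 ≤ s → 0 ≤ t → s + t = 1 → ∀ (x y : ℂ) (r : ℝ), ‖x‖ ≤ r → ‖y‖ ≤ r →
      ‖(s : ℂ) * x + (t : ℂ) * y‖ ≤ r := by
    intro s t hs ht hst x y r hx hy
    refine (norm_add_le _ _).trans ?_
    rw [norm_mul, norm_mul, Complex.norm_of_nonneg hs, Complex.norm_of_nonneg ht]
    calc _ ≤ s * r + t * r := by gcongr
      _ = r := by rw [← add_mul, hst, one_mul]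
  have hK : IsCCI ρ K := by
    refine ⟨?_, ?_, ?_, ?_⟩
    · obtain ⟨y⟩ := hY.1.1
      have hs := hΦ.isSt y
      obtain ⟨F, hF1, hF2⟩ := ext_fun (redCstar G).toSubalgebra.toSubmodule
        { toFun := fun a => Φ ⟨a.1, a.2⟩ y
          map_add' := fun a b => congrArg (fun f : C(Y, ℂ) => f y)
            (map_add Φ (⟨a.1, a.2⟩ : redCstar G) ⟨b.1, b.2⟩)
          map_smul' := fun c a => congrArg (fun f : C(Y, ℂ) => f y)
            (map_smul Φ c (⟨a.1, a.2⟩ : redCstar G)) } (fun a => hs.le ⟨a.1, a.2⟩)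
      have hF3 : ∀ a : redCstar G, F a = Φ a y := fun a => hF2 ⟨a.1, a.2⟩
      refine ⟨WD.of (F.comp (ContinuousLinearMap.fst ℂ B C(Y, ℂ)) +
        (ContinuousMap.evalCLM ℂ y).comp (ContinuousLinearMap.snd ℂ B C(Y, ℂ))), ?_, ?_, ?_, ?_, ?_⟩
      · show F 1 + (0 : C(Y, ℂ)) y = 1
        have := hF3 1
        rw [hΦ.1] at this
        simpa using this
      · show F 0 + (1 : C(Y, ℂ)) y = 1
        simp
      · intro b
        show ‖F b + (0 : C(Y, ℂ)) y‖ ≤ _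
        simpa using hF1 b
      · intro f
        show ‖F 0 + f y‖ ≤ _
        simpa using f.norm_coe_le_norm y
      · intro a
        show F a + (0 : C(Y, ℂ)) y = F 0 + Φ a y
        simp [hF3]
    · have : K = {F | F (1, 0) = 1} ∩ ({F | F (0, 1) = 1} ∩ ((⋂ b : B, {F | ‖F (b, 0)‖ ≤ ‖b‖}) ∩
          ((⋂ f : C(Y, ℂ), {F | ‖F (0, f)‖ ≤ ‖f‖}) ∩
            ⋂ a : redCstar G, {F | F ((a : B), 0) = F (0, Φ a)}))) := by
        ext φ; simp [K]
      rw [this]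
      refine (isClosed_eq (WD.continuous_eval _) continuous_const).inter
        ((isClosed_eq (WD.continuous_eval _) continuous_const).inter
        ((isClosed_iInter fun a => isClosed_le (WD.continuous_eval _).norm continuous_const).inter
        ((isClosed_iInter fun a => isClosed_le (WD.continuous_eval _).norm continuous_const).inter
        (isClosed_iInter fun a => isClosed_eq (WD.continuous_eval _) (WD.continuous_eval _)))))
    · intro φ hφ ψ hψ s t hs ht hst
      refine ⟨?_, ?_, fun b => ?_, fun f => ?_, fun a => ?_⟩
      · simp only [WD.add_apply, WD.smul_apply, hφ.1, hψ.1, mul_one]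
        exact_mod_cast hst
      · simp only [WD.add_apply, WD.smul_apply, hφ.2.1, hψ.2.1, mul_one]
        exact_mod_cast hst
      · simp only [WD.add_apply, WD.smul_apply]
        exact hconv s t hs ht hst _ _ _ (hφ.2.2.1 b) (hψ.2.2.1 b)
      · simp only [WD.add_apply, WD.smul_apply]
        exact hconv s t hs ht hst _ _ _ (hφ.2.2.2.1 f) (hψ.2.2.2.1 f)
      · simp only [WD.add_apply, WD.smul_apply, hφ.2.2.2.2 a, hψ.2.2.2.2 a]
    · intro g F hF
      refine ⟨?_, ?_, fun b => ?_, fun f => ?_, fun a => ?_⟩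
      · rw [actW_apply, hρ, hP.conj_one]; exact hF.1
      · rw [actW_apply, hρ, map_zero]; exact hF.2.1
      · rw [actW_apply, hρ]
        exact (hF.2.2.1 _).trans (hP.conj_norm _ _)
      · rw [actW_apply, hρ, map_zero]
        exact (hF.2.2.2.1 _).trans (trY_norm _ _)
      · rw [actW_apply, actW_apply, hρ, hρ, map_zero]
        have h1 : conjU perm g⁻¹ (a : B) = ((uu g⁻¹ * a * uu g⁻¹⁻¹ : redCstar G) : B) := by
          rw [conjU_apply, ← uu_coe, ← uu_coe]; rfl
        have h2 : Φ (uu g⁻¹ * a * uu g⁻¹⁻¹) = trY g⁻¹⁻¹ (Φ a) := by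
          ext y; exact hE g⁻¹ a y
        rw [h1, ← h2]
        exact hF.2.2.2.2 _
  obtain ⟨q, hq, hqc, hqe⟩ := theoremF hY ρ
    (by
      refine ContinuousLinearMap.ext fun x => ?_
      obtain ⟨b, f⟩ := x
      rw [hρ, hP.conj_id]
      refine Prod.ext rfl ?_
      ext y
      show f ((1 : G)⁻¹ • y) = f y
      simp)
    (fun g h => by
      refine ContinuousLinearMap.ext fun x => ?_
      obtain ⟨b, f⟩ := x
      rw [ContinuousLinearMap.comp_apply, hρ, hρ, hρ, hP.conj_mul]
      refine Prod.ext rfl ?_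
      ext y
      show f ((g * h)⁻¹ • y) = f (h⁻¹ • g⁻¹ • y)
      rw [mul_inv_rev, mul_smul]) hK (C := 2)
    (fun F hF x => by
      obtain ⟨b, f⟩ := x
      have e : F (b, f) = F (b, 0) + F (0, f) := by
        have e1 := map_add (WD.to F) (b, 0) (0, f)
        rw [Prod.mk_add_mk, add_zero, zero_add] at e1
        exact e1
      rw [e]
      refine (norm_add_le _ _).trans ?_
      have h1 := (hF.2.2.1 b).trans (norm_fst_le (b, f))
      have h2 := (hF.2.2.2.1 f).trans (norm_snd_le (b, f))
      linarith)
  have hqF := lemmaR hY.1 (fun y => (WD.to (q y)).comp (ContinuousLinearMap.inr ℂ B C(Y, ℂ)))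
    (fun y => ⟨(hq y).2.1, (hq y).2.2.2.1⟩)
    (fun f => (WD.continuous_eval (E := B × C(Y, ℂ)) (0, f)).comp hqc)
    (fun g y f => by
      show q (g • y) (0, f) = q y (0, trY g f)
      rw [hqe, actW_apply, hρ, map_zero, inv_inv])
  refine ⟨fun y => (WD.to (q y)).comp (ContinuousLinearMap.inl ℂ B C(Y, ℂ)),
    fun y => ⟨(hq y).1, (hq y).2.2.1⟩, fun a y => ?_, fun a => (WD.continuous_eval (E := B × C(Y, ℂ)) (a, 0)).comp hqc,
    fun g y a => ?_⟩
  · refine Eq.trans ((hq y).2.2.2.2 a) ?_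
    exact hqF y (Φ a)
  · show q (g • y) (a, 0) = q y (_, 0)
    rw [hqe, actW_apply, hρ]
    rfl

end A


section A2

variable {Y : Type u} [TopologicalSpace Y] [CompactSpace Y]

theorem multDom {α : Type u} {j : α → Y} {y : Y} {ψ : (ℓ²(α, ℂ) →L[ℂ] ℓ²(α, ℂ)) →L[ℂ] ℂ} (h : IsSt ψ)
    (hj : ∀ f, ψ (mulY j f) = f y) {f : C(Y, ℂ)} (hf : f y = 0) (a : ℓ²(α, ℂ) →L[ℂ] ℓ²(α, ℂ)) :
    ψ (mulY j f * a) = 0 ∧ ψ (a * mulY j f) = 0 := by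
  constructor
  · have h1 : ψ (star (mulY j (star f)) * mulY j (star f)) = 0 := by
      rw [mulY_star, ← mulY_mul, hj]; simp [hf]
    have h2 := (h.cs_aux h1 a).1
    rwa [mulY_star, star_star] at h2
  · have h1 : ψ (star (mulY j f) * mulY j f) = 0 := by
      rw [mulY_star, ← mulY_mul, hj]; simp [hf]
    have h2 := (h.cs_aux h1 (star a)).2
    rwa [star_star] at h2

variable [T2Space Y] [MulAction G Y] [ContinuousConstSMul G Y]

theorem restrDelta {α : Type u} [MulAction G α] (hB : IsBoundary G Y) (j : α → Y)
    (hj : ∀ (g : G) x, j (g • x) = g • j x) (ψ : Y → (ℓ²(α, ℂ) →L[ℂ] ℓ²(α, ℂ)) →L[ℂ] ℂ)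
    (hst : ∀ y, IsSt (ψ y)) (hc : ∀ a, Continuous fun y => ψ y a)
    (he : ∀ (g : G) y a, ψ (g • y) a = ψ y (conjU perm g⁻¹ a)) (y : Y) (f : C(Y, ℂ)) :
    ψ y (mulY j f) = f y := by
  refine lemmaR hB (fun y => (ψ y).comp (mulY j)) (fun y => ⟨?_, fun f => ?_⟩)
    (fun f => hc _) (fun g y f => ?_) y f
  · show ψ y (mulY j 1) = 1
    rw [mulY_one, (hst y).one]
  · exact ((hst y).le _).trans (mulY_norm j f)
  · show ψ (g • y) (mulY j f) = ψ y (mulY j (trY g f))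
    rw [he, conjU_apply, mulY_conj j hj, inv_inv]

theorem vanish_of_moves {α : Type u} [MulAction G α] (j : α → Y)
    (hj : ∀ (g : G) x, j (g • x) = g • j x) {y : Y} {ψ : (ℓ²(α, ℂ) →L[ℂ] ℓ²(α, ℂ)) →L[ℂ] ℂ}
    (hst : IsSt ψ) (hd : ∀ f, ψ (mulY j f) = f y) {s : G} (hs : s • y ≠ y) :
    ψ (perm s) = 0 := by
  have hP := perm_urep (G := G) (α := α)
  have hne : s⁻¹ • y ≠ y := fun h => hs (by rw [inv_smul_eq_iff] at h; exact h.symm)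
  obtain ⟨F, hF0, hF1, -⟩ := exists_continuous_zero_one_of_isClosed (isClosed_singleton (x := s⁻¹ • y))
    (isClosed_singleton (x := y)) (by simpa using hne)
  have hz : cR F (s⁻¹ • y) = 0 := by
    show ((F (s⁻¹ • y) : ℝ) : ℂ) = 0
    rw [hF0 rfl]; simp
  have ho : cR F y = 1 := by
    show ((F y : ℝ) : ℂ) = 1
    rw [hF1 rfl]; simp
  have h1 : perm s * mulY j (cR F) = mulY j (trY s⁻¹ (cR F)) * perm s := by
    rw [← mulY_conj j hj, mul_assoc _ _ (perm s), ← hP.mul, inv_mul_cancel, hP.one, mul_one]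
  have h2 : perm s = mulY j (trY s⁻¹ (cR F)) * perm s + perm s * mulY j (1 - cR F) := by
    rw [← h1, map_sub, mul_sub, mulY_one, mul_one]; abel
  rw [h2, map_add, (multDom hst hd (f := trY s⁻¹ (cR F)) (by exact hz) _).1,
    (multDom hst hd (f := 1 - cR F) (by simp [ho]) _).2, add_zero]

end A2


/-! ### Almost invariant vectors from an invariant mean -/

section Day

variable (G) in
/-- Real `ℓ¹`. -/
abbrev L1 := lp (fun _ : G => ℝ) 1

theorem sh_mem (g : G) (f : L1 G) : Memℓp (fun h => f (g⁻¹ * h)) 1 := by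
  have hf : Summable fun i : G => ‖f i‖ ^ (1 : ℝ≥0∞).toReal :=
    (memℓp_gen_iff (by norm_num)).1 (lp.memℓp f)
  exact memℓp_gen ((Equiv.mulLeft g⁻¹).summable_iff.2 hf)

/-- Translation on `ℓ¹`. -/
def shI (g : G) : L1 G →ₗᵢ[ℝ] L1 G :=
{ toFun := fun f => ⟨fun h => f (g⁻¹ * h), sh_mem g f⟩
  map_add' := by intro f₁ f₂; ext h; simp; rfl
  map_smul' := by intro c f; ext h; simp [lp.coeFn_smul]
  norm_map' := by
    intro f
    rw [lp.norm_eq_tsum_rpow (by norm_num) f, lp.norm_eq_tsum_rpow (by norm_num)]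
    congr 1
    exact (Equiv.mulLeft g⁻¹).tsum_eq (fun h => ‖f h‖ ^ (1 : ℝ≥0∞).toReal) }

/-- Translation on `ℓ¹`. -/
def sh (g : G) : L1 G →L[ℝ] L1 G := (shI g).toContinuousLinearMap

theorem sh_apply (g : G) (f : L1 G) (x : G) : sh g f x = f (g⁻¹ * x) := rfl

theorem sh_single [DecidableEq G] (g x : G) (c : ℝ) :
    sh g (lp.single 1 x c : L1 G) = lp.single 1 (g * x) c := by
  ext z
  rw [sh_apply]
  simp only [lp.coeFn_single]
  by_cases h : z = g * x
  · subst h; simp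
  · rw [Pi.single_eq_of_ne h, Pi.single_eq_of_ne]
    rintro rfl; simp at h

theorem L1_summable (f : L1 G) : Summable fun x => |f x| := by
  have := (memℓp_gen_iff (by norm_num)).1 (lp.memℓp f)
  simpa using this

theorem L1_norm (f : L1 G) : ‖f‖ = ∑' x, |f x| := by
  rw [lp.norm_eq_tsum_rpow (by norm_num) f]; simp

theorem exists_kappa (H : Subgroup G) : ∃ κ : G → G, (∀ g, κ g ∈ H) ∧
    ∀ h ∈ H, ∀ g, κ (h * g) = h * κ g := by
  let r : G → G := fun g => (Quotient.mk (QuotientGroup.rightRel H) g).out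
  refine ⟨fun g => g * (r g)⁻¹, fun g => ?_, fun h hh g => ?_⟩
  · have := Quotient.mk_out (s := QuotientGroup.rightRel H) g
    exact QuotientGroup.rightRel_apply.1 this
  · have : r (h * g) = r g := by
      have e : (Quotient.mk (QuotientGroup.rightRel H) (h * g)) =
          Quotient.mk (QuotientGroup.rightRel H) g :=
        Quotient.sound (QuotientGroup.rightRel_apply.2 (by simpa using H.inv_mem hh))
      simp only [r, e]
    simp only [this, mul_assoc]

theorem day (H : Subgroup G) {ψ : (ℓ²(G, ℂ) →L[ℂ] ℓ²(G, ℂ)) →L[ℂ] ℂ} (hst : IsSt ψ)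
    (hinv : ∀ h ∈ H, ∀ a, ψ (conjU perm h a) = ψ a) (S : Finset G) (hS : ∀ h ∈ S, h ∈ H)
    {ε : ℝ} (hε : 0 < ε) :
    ∃ f : L1 G, (∀ x, 0 ≤ f x) ∧ (∑' x, f x = 1) ∧ (∀ x, x ∉ H → f x = 0) ∧
      ∀ h ∈ S, ‖sh h f - f‖ ≤ ε := by
  classical
  obtain ⟨κ, hκ, hκm⟩ := exists_kappa H
  let δ : G → L1 G := fun u => lp.single 1 (κ u) (1 : ℝ)
  let D : Set (L1 G) := Set.range δ
  let T : L1 G →L[ℝ] (S → L1 G) :=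
    ContinuousLinearMap.pi fun h => sh (h : G) - ContinuousLinearMap.id ℝ _
  have key : (0 : S → L1 G) ∈ closure (T '' convexHull ℝ D) := by
    by_contra hcon
    obtain ⟨f, c, hfc, hc⟩ := geometric_hahn_banach_closed_point
      ((convex_convexHull ℝ D).is_linear_image T.toLinearMap.isLinear).closure isClosed_closure hcon
    rw [map_zero] at hc
    let F : S → L1 G →L[ℝ] ℝ := fun h => f.comp (ContinuousLinearMap.single ℝ (fun _ : S => L1 G) h)
    have hδ : ∀ u, ‖δ u‖ = 1 := fun u => by
      simp only [δ]; rw [lp.norm_single (by norm_num)]; simp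
    have hFb : ∀ h u, ‖((F h (δ u) : ℝ) : ℂ)‖ ≤ ‖F h‖ := fun h u => by
      have := (F h).le_opNorm (δ u)
      rw [hδ, mul_one] at this
      simpa using this
    let θ : G → ℝ := fun u => f (T (δ u))
    have hθc : ∀ u, θ u < c := fun u =>
      hfc _ (subset_closure ⟨δ u, subset_convexHull ℝ D ⟨u, rfl⟩, rfl⟩)
    have hθ : ∀ u, θ u = ∑ h : S, (F h (δ (h * u)) - F h (δ u)) := by
      intro u
      have e1 : T (δ u) = ∑ h : S, Pi.single h (T (δ u) h) :=
        (Finset.univ_sum_single (T (δ u))).symm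
      simp only [θ]
      rw [e1, map_sum]
      refine Finset.sum_congr rfl fun h _ => ?_
      have e2 : T (δ u) h = δ (h * u) - δ u := by
        show sh (h : G) (δ u) - δ u = _
        simp only [δ]
        rw [sh_single, hκm h (hS h h.2)]
      rw [e2, ← map_sub]
      rfl
    have hθb : ∀ u, |θ u| ≤ ‖f‖ * ‖T‖ := fun u => by
      refine (f.le_opNorm _).trans ?_
      gcongr
      refine (T.le_opNorm _).trans ?_
      rw [hδ, mul_one]
    have hC : 0 ≤ ‖f‖ * ‖T‖ := by positivity
    let Mθ := mulop (fun u => ((θ u : ℝ) : ℂ)) _ hC (fun u => by simpa using hθb u)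
    let Mφ : S → (ℓ²(G, ℂ) →L[ℂ] ℓ²(G, ℂ)) := fun h =>
      mulop (fun u => ((F h (δ u) : ℝ) : ℂ)) ‖F h‖ (norm_nonneg _) (hFb h)
    have hM : Mθ = ∑ h : S, (conjU perm (h : G)⁻¹ (Mφ h) - Mφ h) := by
      ext v x
      have e1 : (∑ h : S, (conjU perm (h : G)⁻¹ (Mφ h) - Mφ h)) v =
          ∑ h : S, (conjU perm (h : G)⁻¹ (Mφ h) v - Mφ h v) := by
        simp
      rw [e1, lp.coeFn_sum, Finset.sum_apply]
      show ((θ x : ℝ) : ℂ) * v x = _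
      rw [hθ, Complex.ofReal_sum, Finset.sum_mul]
      refine Finset.sum_congr rfl fun h _ => ?_
      rw [conjU_apply]
      show _ = ((F h (δ (((h : G)⁻¹)⁻¹ * x)) : ℝ) : ℂ) * v ((((h : G)⁻¹)⁻¹)⁻¹ * (((h : G)⁻¹)⁻¹ * x)) -
        ((F h (δ x) : ℝ) : ℂ) * v x
      simp
      ring
    have h0 : ψ Mθ = 0 := by
      rw [hM, map_sum]
      refine Finset.sum_eq_zero fun h _ => ?_
      rw [map_sub, hinv _ (H.inv_mem (hS h h.2)), sub_self]
    have hgb : ∀ u, ‖((Real.sqrt (c - θ u) : ℝ) : ℂ)‖ ≤ Real.sqrt (|c| + ‖f‖ * ‖T‖) := fun u => by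
      rw [Complex.norm_of_nonneg (Real.sqrt_nonneg _)]
      apply Real.sqrt_le_sqrt
      have := (abs_le.1 (hθb u)).1
      have := le_abs_self c
      linarith
    let Q := mulop (fun u => ((Real.sqrt (c - θ u) : ℝ) : ℂ)) _ (Real.sqrt_nonneg _) hgb
    have hQ : star Q * Q = (c : ℂ) • 1 - Mθ := by
      simp only [Q]
      rw [mulop_star]
      ext v x
      show star ((Real.sqrt (c - θ x) : ℝ) : ℂ) * (((Real.sqrt (c - θ x) : ℝ) : ℂ) * v x) =
        (c : ℂ) * v x - (θ x : ℂ) * v x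
      rw [← mul_assoc, ← sub_mul]
      congr 1
      rw [Complex.star_def, Complex.conj_ofReal, ← Complex.ofReal_mul,
        Real.mul_self_sqrt (by linarith [hθc x])]
      simp
    have h1 := hst.nonneg Q
    rw [hQ, map_sub, h0, map_smul, hst.one] at h1
    simp at h1
    linarith
  obtain ⟨p, ⟨f, hf, rfl⟩, hp⟩ := Metric.mem_closure_iff.1 key ε hε
  have hprop : convexHull ℝ D ⊆ {f : L1 G | (∀ x, 0 ≤ f x) ∧ (∑' x, f x = 1) ∧
      ∀ x, x ∉ H → f x = 0} := by
    refine convexHull_min ?_ ?_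
    · rintro _ ⟨u, rfl⟩
      refine ⟨fun x => ?_, ?_, fun x hx => ?_⟩
      · simp only [δ, lp.coeFn_single]
        by_cases h : x = κ u
        · subst h; simp
        · rw [Pi.single_eq_of_ne h]
      · simp only [δ, lp.coeFn_single]
        rw [tsum_eq_single (κ u)]
        · simp
        · intro x hx; rw [Pi.single_eq_of_ne hx]
      · simp only [δ, lp.coeFn_single]
        rw [Pi.single_eq_of_ne]
        rintro rfl; exact hx (hκ u)
    · intro f hf g hg s t hs ht hst
      refine ⟨fun x => ?_, ?_, fun x hx => ?_⟩
      · show 0 ≤ s * f x + t * g x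
        have := hf.1 x
        have := hg.1 x
        positivity
      · show ∑' x, (s * f x + t * g x) = 1
        have hf' := (L1_summable f).of_abs
        have hg' := (L1_summable g).of_abs
        rw [(hf'.mul_left s).tsum_add (hg'.mul_left t), tsum_mul_left, tsum_mul_left, hf.2.1, hg.2.1]
        linarith
      · show s * f x + t * g x = 0
        rw [hf.2.2 x hx, hg.2.2 x hx]; simp
  refine ⟨f, (hprop hf).1, (hprop hf).2.1, (hprop hf).2.2, fun h hh => ?_⟩
  rw [dist_zero_left] at hp
  have := norm_le_pi_norm (T f) ⟨h, hh⟩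
  exact this.trans hp.le

end Day


section AlmostInv

theorem sqrt_diff {a b : ℝ} (ha : 0 ≤ a) (hb : 0 ≤ b) :
    (Real.sqrt a - Real.sqrt b) ^ 2 ≤ |a - b| := by
  have h1 : a - b = (Real.sqrt a - Real.sqrt b) * (Real.sqrt a + Real.sqrt b) := by
    nlinarith [Real.mul_self_sqrt ha, Real.mul_self_sqrt hb]
  have h2 : |Real.sqrt a - Real.sqrt b| ≤ Real.sqrt a + Real.sqrt b := by
    rw [abs_le]; constructor <;> linarith [Real.sqrt_nonneg a, Real.sqrt_nonneg b]
  rw [h1, abs_mul, abs_of_nonneg (add_nonneg (Real.sqrt_nonneg a) (Real.sqrt_nonneg b)), ← sq_abs, sq]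
  gcongr

theorem l2_norm_sq {α : Type*} (v : ℓ²(α, ℂ)) : ‖v‖ ^ 2 = ∑' x, ‖v x‖ ^ 2 := by
  have := lp.norm_rpow_eq_tsum (p := 2) (by norm_num) v
  simpa using this

theorem almostInv (H : Subgroup G) {ψ : (ℓ²(G, ℂ) →L[ℂ] ℓ²(G, ℂ)) →L[ℂ] ℂ} (hst : IsSt ψ)
    (hinv : ∀ h ∈ H, ∀ a, ψ (conjU perm h a) = ψ a) (S : Finset G) {ε : ℝ} (hε : 0 < ε) :
    ∃ ξ : ℓ²(G, ℂ), (∀ g, g ∉ H → inner ℂ ξ (perm g ξ) = 0) ∧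
      ∀ g ∈ S, g ∈ H → ‖inner ℂ ξ (perm g ξ) - 1‖ ≤ ε := by
  classical
  obtain ⟨f, hf0, hf1, hfH, hfS⟩ := day H hst hinv (S.filter (· ∈ H))
    (fun h hh => (Finset.mem_filter.1 hh).2) (ε := ε ^ 2) (by positivity)
  have hsum := (L1_summable f).of_abs
  have hn : ∀ x, ‖((Real.sqrt (f x) : ℝ) : ℂ)‖ ^ 2 = f x := fun x => by
    rw [Complex.norm_of_nonneg (Real.sqrt_nonneg _), Real.sq_sqrt (hf0 x)]
  have hmem : Memℓp (fun x => ((Real.sqrt (f x) : ℝ) : ℂ)) 2 := by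
    refine memℓp_gen ?_
    have : ∀ x, ‖((Real.sqrt (f x) : ℝ) : ℂ)‖ ^ (2 : ℝ≥0∞).toReal = f x := fun x => by
      rw [← hn x]; norm_num
    simpa only [this] using hsum
  let ξ : ℓ²(G, ℂ) := ⟨_, hmem⟩
  have hξ : ∀ x, ξ x = ((Real.sqrt (f x) : ℝ) : ℂ) := fun x => rfl
  have hξ1 : ‖ξ‖ = 1 := by
    have : ‖ξ‖ ^ 2 = 1 := by
      rw [l2_norm_sq]; simp only [hξ, hn]; exact hf1
    nlinarith [norm_nonneg ξ]
  refine ⟨ξ, fun g hg => ?_, fun g hgS hgH => ?_⟩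
  · rw [lp.inner_eq_tsum]
    refine (tsum_congr fun x => ?_).trans tsum_zero
    rw [perm_apply]
    by_cases hx : x ∈ H
    · have : g⁻¹ • x ∉ H := fun h => hg (by
        have := H.mul_mem hx (H.inv_mem h)
        simpa [mul_assoc] using this)
      rw [hξ (g⁻¹ • x), hfH _ this]; simp
    · rw [hξ x, hfH _ hx]; simp
  · have h1 : (inner ℂ ξ (perm g ξ) - 1 : ℂ) = inner ℂ ξ (perm g ξ - ξ) := by
      rw [inner_sub_right]
      congr 1
      rw [inner_self_eq_norm_sq_to_K, hξ1]; simp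
    rw [h1]
    refine (norm_inner_le_norm _ _).trans ?_
    rw [hξ1, one_mul]
    have h2 : ‖perm g ξ - ξ‖ ^ 2 ≤ ε ^ 2 := by
      refine le_trans ?_ (hfS g (Finset.mem_filter.2 ⟨hgS, hgH⟩))
      rw [l2_norm_sq, L1_norm]
      have hle : ∀ x, ‖(perm g ξ - ξ) x‖ ^ 2 ≤ |(sh g f - f) x| := fun x => by
        show ‖((Real.sqrt (f (g⁻¹ * x)) : ℝ) : ℂ) - ((Real.sqrt (f x) : ℝ) : ℂ)‖ ^ 2 ≤
          |f (g⁻¹ * x) - f x|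
        rw [← Complex.ofReal_sub, Complex.norm_real, Real.norm_eq_abs, sq_abs]
        exact sqrt_diff (hf0 _) (hf0 _)
      have hs := L1_summable (sh g f - f)
      exact (Summable.of_nonneg_of_le (fun x => by positivity) hle hs).tsum_le_tsum hle hs
    exact (sq_le_sq₀ (norm_nonneg _) hε.le).1 h2

/-- The linear extension of a unitary representation to the group algebra. -/
def URep.toHom {B : Type*} [CStarAlgebra B] {U : G → B} (hU : URep U) : MonoidAlgebra ℂ G →ₐ[ℂ] B :=
  MonoidAlgebra.lift ℂ B G { toFun := U, map_one' := hU.one, map_mul' := hU.mul }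

theorem URep.toHom_single {B : Type*} [CStarAlgebra B] {U : G → B} (hU : URep U) (g : G) (c : ℂ) :
    hU.toHom (MonoidAlgebra.single g c) = c • U g := by
  simp [URep.toHom]

open Filter Topology in
theorem weakCont (Y : Type u) [MulAction G Y] (x0 : Y)
    {ψ : (ℓ²(G, ℂ) →L[ℂ] ℓ²(G, ℂ)) →L[ℂ] ℂ} (hst : IsSt ψ)
    (hinv : ∀ h ∈ MulAction.stabilizer G x0, ∀ a, ψ (conjU perm h a) = ψ a) (a : MonoidAlgebra ℂ G) :
    ‖(perm_urep (G := G) (α := MulAction.orbit G x0)).toHom a‖ ≤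
      ‖(perm_urep (G := G) (α := G)).toHom a‖ := by
  classical
  set pi := (perm_urep (G := G) (α := MulAction.orbit G x0)).toHom with hpi
  set la := (perm_urep (G := G) (α := G)).toHom with hla
  have hpis : ∀ g c, pi (MonoidAlgebra.single g c) = c • perm g := fun g c => URep.toHom_single _ g c
  have hlas : ∀ g c, la (MonoidAlgebra.single g c) = c • perm g := fun g c => URep.toHom_single _ g c
  have hex : ∀ p : Finset G × ℕ, ∃ ξ : ℓ²(G, ℂ), (∀ g, g ∉ MulAction.stabilizer G x0 →
      inner ℂ ξ (perm g ξ) = 0) ∧ ∀ g ∈ p.1, g ∈ MulAction.stabilizer G x0 →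
        ‖inner ℂ ξ (perm g ξ) - 1‖ ≤ 1 / ((p.2 : ℝ) + 1) := fun p =>
    almostInv _ hst hinv p.1 (by positivity)
  choose ξ hξ0 hξ1 using hex
  let o : MulAction.orbit G x0 := ⟨x0, MulAction.mem_orbit_self x0⟩
  let δ : ℓ²(MulAction.orbit G x0, ℂ) := lp.single 2 o 1
  -- convergence of the coefficient functions
  have hlim1 : ∀ g : G, Tendsto (fun p => inner ℂ (ξ p) (perm g (ξ p))) atTop
      (𝓝 (inner ℂ δ (perm g δ))) := by
    intro g
    have hδ : inner ℂ δ (perm g δ) = if g ∈ MulAction.stabilizer G x0 then (1 : ℂ) else 0 := by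
      simp only [δ]
      rw [perm_single, lp.inner_single_left]
      simp only [lp.coeFn_single]
      split_ifs with h
      · have : g • o = o := Subtype.ext h
        rw [this]; simp
      · have : o ≠ g • o := fun e => h (congrArg Subtype.val e).symm
        rw [Pi.single_eq_of_ne this]; simp
    rw [hδ]
    split_ifs with h
    · rw [Metric.tendsto_atTop']
      intro ε hε
      obtain ⟨n, hn⟩ := exists_nat_one_div_lt hε
      refine ⟨({g}, n), fun p hp => ?_⟩
      rw [dist_eq_norm]
      have hp' : ({g}, n) ≤ p := le_of_lt hp
      refine (hξ1 p g (hp'.1 (Finset.mem_singleton_self g)) h).trans_lt (lt_of_le_of_lt ?_ hn)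
      have : (n : ℝ) ≤ p.2 := by exact_mod_cast hp'.2
      gcongr
    · simp only [fun p => hξ0 p g h]
      exact tendsto_const_nhds
  have hun : ∀ {α : Type u} [MulAction G α] (g k : G) (v : ℓ²(α, ℂ)),
      inner ℂ (perm g v) (perm k v) = inner ℂ v (perm (g⁻¹ * k) v) := by
    intro α _ g k v
    have hP := perm_urep (G := G) (α := α)
    rw [hP.mul, ← hP.star, ContinuousLinearMap.star_eq_adjoint]
    exact (ContinuousLinearMap.adjoint_inner_right _ _ _).symm
  have hlim2 : ∀ b c : MonoidAlgebra ℂ G, Tendsto (fun p => inner ℂ (la b (ξ p)) (la c (ξ p))) atTop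
      (𝓝 (inner ℂ (pi b δ) (pi c δ))) := by
    intro b c
    induction b using MonoidAlgebra.induction_linear with
    | zero => simp
    | add b1 b2 h1 h2 =>
      simp only [map_add, add_apply, inner_add_left]
      exact h1.add h2
    | single g r =>
      induction c using MonoidAlgebra.induction_linear with
      | zero => simp
      | add c1 c2 h1 h2 =>
        simp only [map_add, add_apply, inner_add_right]
        exact h1.add h2
      | single k s =>
        simp only [hpis, hlas, smul_apply, inner_smul_left, inner_smul_right, hun]
        exact ((hlim1 _).const_mul _).const_mul _
  have hlim3 : ∀ b : MonoidAlgebra ℂ G, Tendsto (fun p => ‖la b (ξ p)‖ ^ 2) atTop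
      (𝓝 (‖pi b δ‖ ^ 2)) := by
    intro b
    have := (Complex.continuous_re.tendsto _).comp (hlim2 b b)
    have e : ∀ {α : Type u} (v : ℓ²(α, ℂ)), (inner ℂ v v : ℂ).re = ‖v‖ ^ 2 := fun v =>
      inner_self_eq_norm_sq (𝕜 := ℂ) v
    simpa only [Function.comp_def, e] using this
  have hb : ∀ b, ‖pi a (pi b δ)‖ ≤ ‖la a‖ * ‖pi b δ‖ := by
    intro b
    have h1 : ‖pi (a * b) δ‖ ^ 2 ≤ ‖la a‖ ^ 2 * ‖pi b δ‖ ^ 2 := by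
      refine le_of_tendsto_of_tendsto' (hlim3 (a * b)) ((hlim3 b).const_mul _) fun p => ?_
      rw [map_mul, ← mul_pow]
      gcongr
      exact (la a).le_opNorm _
    rw [map_mul, ← mul_pow] at h1
    exact (sq_le_sq₀ (norm_nonneg _) (by positivity)).1 h1
  refine ContinuousLinearMap.opNorm_le_bound _ (norm_nonneg _) fun v => ?_
  have hcl : IsClosed {v | ‖pi a v‖ ≤ ‖la a‖ * ‖v‖} :=
    isClosed_le (by fun_prop) (by fun_prop)
  let W : Submodule ℂ (ℓ²(MulAction.orbit G x0, ℂ)) :=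
    LinearMap.range (((ContinuousLinearMap.apply ℂ _ δ).toLinearMap).comp pi.toLinearMap)
  have hW : ∀ b, pi b δ ∈ W := fun b => ⟨b, rfl⟩
  have hv : v ∈ closure (W : Set (ℓ²(MulAction.orbit G x0, ℂ))) := by
    refine mem_closure_of_tendsto (lp.hasSum_single (by norm_num) v) (Eventually.of_forall fun s => ?_)
    refine W.sum_mem fun z _ => ?_
    obtain ⟨z, g, rfl⟩ := z
    have : (lp.single 2 (⟨g • x0, g, rfl⟩ : MulAction.orbit G x0) (v ⟨g • x0, g, rfl⟩) :
        ℓ²(MulAction.orbit G x0, ℂ)) = pi (MonoidAlgebra.single g (v ⟨g • x0, g, rfl⟩)) δ := by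
      rw [hpis, smul_apply]
      simp only [δ]
      rw [perm_single, ← lp.single_smul]
      simp only [smul_eq_mul, mul_one]
      rfl
    rw [this]
    exact hW _
  refine closure_minimal ?_ hcl hv
  rintro _ ⟨b, rfl⟩
  exact hb b

end AlmostInv


/-! ### Simplicity and quasi-regular representations -/

section Simp

theorem exists_star {B : Type*} [CStarAlgebra B] {U : G → B} (hU : URep U)
    {C : Type*} [CStarAlgebra C] {V : G → C} (hV : URep V) (a : MonoidAlgebra ℂ G) :
    ∃ a', hU.toHom a' = star (hU.toHom a) ∧ hV.toHom a' = star (hV.toHom a) := by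
  induction a using MonoidAlgebra.induction_linear with
  | zero => exact ⟨0, by simp, by simp⟩
  | add a b ha hb =>
    obtain ⟨a', h1, h2⟩ := ha
    obtain ⟨b', h3, h4⟩ := hb
    exact ⟨a' + b', by rw [map_add, map_add, star_add, h1, h3],
      by rw [map_add, map_add, star_add, h2, h4]⟩
  | single g c =>
    refine ⟨MonoidAlgebra.single g⁻¹ (star c), ?_, ?_⟩
    · rw [URep.toHom_single, URep.toHom_single, star_smul, hU.star]
    · rw [URep.toHom_single, URep.toHom_single, star_smul, hV.star]

theorem toHom_coe (a : MonoidAlgebra ℂ G) :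
    ((uu_urep (G := G)).toHom a : ℓ²(G, ℂ) →L[ℂ] ℓ²(G, ℂ)) = (perm_urep (G := G) (α := G)).toHom a := by
  induction a using MonoidAlgebra.induction_linear with
  | zero => simp
  | add a b ha hb =>
    rw [map_add, map_add, ← ha, ← hb]; rfl
  | single g c =>
    rw [URep.toHom_single, URep.toHom_single, ← uu_coe]; rfl

theorem dense_toHom : DenseRange (uu_urep (G := G)).toHom := by
  intro x
  rw [closure_subtype]
  have hP := perm_urep (G := G) (α := G)
  have hx : (x : ℓ²(G, ℂ) →L[ℂ] ℓ²(G, ℂ)) ∈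
      (StarAlgebra.adjoin ℂ (Set.range (lreg (G := G)))).topologicalClosure := by
    have := x.2
    unfold redCstar at this
    exact this
  refine closure_mono ?_ hx
  intro z hz
  have : ∃ a, (perm_urep (G := G) (α := G)).toHom a = z := by
    induction hz using StarAlgebra.adjoin_induction with
    | mem z hz =>
      obtain ⟨g, rfl⟩ := hz
      exact ⟨MonoidAlgebra.single g 1, by rw [URep.toHom_single, one_smul, lreg_eq_perm]⟩
    | algebraMap r => exact ⟨algebraMap ℂ _ r, AlgHom.commutes _ r⟩
    | add x y _ _ hx hy =>
      obtain ⟨a, rfl⟩ := hx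
      obtain ⟨b, rfl⟩ := hy
      exact ⟨a + b, map_add _ _ _⟩
    | mul x y _ _ hx hy =>
      obtain ⟨a, rfl⟩ := hx
      obtain ⟨b, rfl⟩ := hy
      exact ⟨a * b, map_mul _ _ _⟩
    | star x _ hx =>
      obtain ⟨a, rfl⟩ := hx
      obtain ⟨a', h, -⟩ := exists_star hP hP a
      exact ⟨a', h⟩
  obtain ⟨a, rfl⟩ := this
  exact ⟨_, ⟨a, rfl⟩, toHom_coe a⟩

theorem exists_ext {B : Type u} [CStarAlgebra B] {V : G → B} (hV : URep V)
    (hb : ∀ a, ‖hV.toHom a‖ ≤ ‖(uu_urep (G := G)).toHom a‖) :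
    ∃ π : redCstar G →⋆ₐ[ℂ] B, Continuous π ∧ ∀ g, π (uu g) = V g := by
  have hd := dense_toHom (G := G)
  set la := (uu_urep (G := G)).toHom with hla
  let P : redCstar G →L[ℂ] B := LinearMap.extendOfNorm hV.toHom.toLinearMap la.toLinearMap
  have hP : ∀ a, P (la a) = hV.toHom a := fun a =>
    LinearMap.extendOfNorm_eq (f := hV.toHom.toLinearMap) (e := la.toLinearMap) hd
      ⟨1, fun x => by rw [one_mul]; exact hb x⟩ a
  have h1 : P 1 = 1 := by
    have := hP 1
    rwa [map_one la, map_one hV.toHom] at this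
  have hmul : ∀ x y, P (x * y) = P x * P y := by
    intro x y
    refine hd.induction_on₂ (p := fun x y => P (x * y) = P x * P y) ?_ ?_ x y
    · exact isClosed_eq (by fun_prop) (by fun_prop)
    · intro a b
      rw [← map_mul, hP, hP, hP, map_mul]
  have hstar : ∀ x, P (star x) = star (P x) := by
    intro x
    refine hd.induction_on (p := fun x => P (star x) = star (P x)) x ?_ ?_
    · exact isClosed_eq (P.continuous.comp continuous_star) (continuous_star.comp P.continuous)
    · intro a
      obtain ⟨a', e1, e2⟩ := exists_star (uu_urep (G := G)) hV a
      rw [hP, ← e2, ← hP, e1]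
  refine ⟨{ toFun := P, map_one' := h1, map_mul' := hmul, map_zero' := map_zero P,
            map_add' := map_add P, commutes' := fun r => ?_, map_star' := hstar }, P.continuous, fun g => ?_⟩
  · show P (algebraMap ℂ _ r) = _
    rw [Algebra.algebraMap_eq_smul_one, map_smul, h1, Algebra.algebraMap_eq_smul_one]
  · have := hP (MonoidAlgebra.single g 1)
    rw [hla, URep.toHom_single, URep.toHom_single, one_smul, one_smul] at this
    exact this

theorem deltaOne_eq [DecidableEq G] : (deltaOne : ℓ²(G, ℂ)) = lp.single 2 1 1 := by
  unfold deltaOne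
  congr
  exact Subsingleton.elim _ _

theorem norm_deltaOne : ‖(deltaOne : ℓ²(G, ℂ))‖ = 1 := by
  classical
  rw [deltaOne_eq, lp.norm_single (by norm_num)]; simp

theorem tauF_one : tauF G 1 = 1 := by
  unfold tauF
  show inner ℂ (deltaOne (G := G)) (deltaOne (G := G)) = (1 : ℂ)
  rw [inner_self_eq_norm_sq_to_K, norm_deltaOne]; simp

theorem tauF_uu {g : G} (hg : g ≠ 1) : tauF G (uu g) = 0 := by
  classical
  unfold tauF
  rw [uu_coe, deltaOne_eq, perm_single, lp.inner_single_left]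
  simp only [lp.coeFn_single]
  rw [Pi.single_eq_of_ne]
  · simp
  · simpa using hg.symm

/-- The trace as a linear map. -/
def tauL : redCstar G →ₗ[ℂ] ℂ where
  toFun := tauF G
  map_add' := fun a b => by
    unfold tauF
    rw [← inner_add_right]; rfl
  map_smul' := fun c a => by
    unfold tauF
    rw [RingHom.id_apply, smul_eq_mul, ← inner_smul_right]; rfl

theorem tauF_le (a : redCstar G) : ‖tauF G a‖ ≤ ‖a‖ := by
  unfold tauF
  refine (norm_inner_le_norm _ _).trans ?_
  rw [norm_deltaOne, one_mul]
  refine (ContinuousLinearMap.le_opNorm _ _).trans ?_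
  rw [norm_deltaOne, mul_one]
  rfl

theorem simple_state (hs : IsCstarSimple G) {B : Type u} [CStarAlgebra B] [Nontrivial B] {V : G → B}
    (hV : URep V) (hb : ∀ a, ‖hV.toHom a‖ ≤ ‖(uu_urep (G := G)).toHom a‖) :
    ∃ F : B →L[ℂ] ℂ, IsSt F ∧ ∀ g, g ≠ 1 → F (V g) = 0 := by
  obtain ⟨π, hcont, hπ⟩ := exists_ext hV hb
  have hinj : Function.Injective π := by
    rcases hs (TwoSidedIdeal.ker π) (by
      have : (TwoSidedIdeal.ker π : Set (redCstar G)) = π ⁻¹' {0} := by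
        ext x; exact TwoSidedIdeal.mem_ker π
      rw [this]
      exact isClosed_singleton.preimage hcont) with h | h
    · rw [injective_iff_map_eq_zero]
      intro x hx
      have : x ∈ TwoSidedIdeal.ker π := (TwoSidedIdeal.mem_ker π).2 hx
      rw [h] at this
      exact (TwoSidedIdeal.mem_bot _).1 this
    · have : (1 : redCstar G) ∈ TwoSidedIdeal.ker π := by rw [h]; trivial
      have := (TwoSidedIdeal.mem_ker π).1 this
      rw [map_one] at this
      exact absurd this one_ne_zero
  have hnorm := NonUnitalStarAlgHom.norm_map π hinj
  let L : redCstar G →ₗ[ℂ] B := π.toAlgHom.toLinearMap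
  let e := LinearEquiv.ofInjective L hinj
  have he : ∀ a, e a = ⟨π a, a, rfl⟩ := fun a => rfl
  obtain ⟨F, hF1, hF2⟩ := ext_fun (LinearMap.range L) (tauL.comp e.symm.toLinearMap) (fun b => by
    obtain ⟨a, rfl⟩ := e.surjective b
    show ‖tauF G (e.symm (e a))‖ ≤ _
    rw [e.symm_apply_apply]
    refine (tauF_le a).trans ?_
    rw [he]
    exact (hnorm a).ge)
  have hF3 : ∀ a, F (π a) = tauF G a := fun a => by
    refine (hF2 (e a)).trans ?_
    show tauF G (e.symm (e a)) = _
    rw [e.symm_apply_apply]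
  refine ⟨F, ⟨?_, hF1⟩, fun g hg => ?_⟩
  · rw [← map_one π, hF3, tauF_one]
  · rw [← hπ, hF3, tauF_uu hg]

end Simp


/-! ### From simplicity to uniqueness of the u.c.p. map -/

theorem phi_uu_zero {Y : Type u} [TopologicalSpace Y] [CompactSpace Y] [T2Space Y]
    [MulAction G Y] [ContinuousConstSMul G Y] (hY : IsFurstenberg G Y) (hs : IsCstarSimple G)
    {Φ : redCstar G →L[ℂ] C(Y, ℂ)} (hΦ : IsUCP Φ) (hE : IsEquivariant Φ) {s : G} (hs1 : s ≠ 1)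
    (y0 : Y) : Φ (uu s) y0 = 0 := by
  classical
  by_contra hne
  obtain ⟨ψ, hst, hψΦ, hψc, hψe⟩ := extA hY hΦ hE
  have hfix : ∀ y, Φ (uu s) y ≠ 0 → s • y = y := by
    intro y hy
    by_contra hsy
    apply hy
    have hj : ∀ (g : G) (x : G), (fun k : G => k • y0) (g • x) = g • (fun k : G => k • y0) x :=
      fun g x => by simp [mul_smul]
    rw [← hψΦ, uu_coe]
    exact vanish_of_moves (fun k : G => k • y0) hj (hst y)
      (restrDelta hY.1 (fun k : G => k • y0) hj ψ hst hψc hψe y) hsy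
  have hweak := weakCont Y y0 (hst y0) (fun h hh a => by
    have h1 := hψe h⁻¹ y0 a
    rw [inv_inv] at h1
    rw [← h1]
    have : h⁻¹ • y0 = y0 := (MulAction.stabilizer G y0).inv_mem hh
    rw [this])
  have hnt : Nontrivial (ℓ²(MulAction.orbit G y0, ℂ) →L[ℂ] ℓ²(MulAction.orbit G y0, ℂ)) := by
    refine ⟨1, 0, fun h => ?_⟩
    have h1 := DFunLike.congr_fun h
      (lp.single 2 (⟨y0, MulAction.mem_orbit_self y0⟩ : MulAction.orbit G y0) (1 : ℂ))
    have h2 := congrArg norm h1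
    rw [show (1 : ℓ²(MulAction.orbit G y0, ℂ) →L[ℂ] ℓ²(MulAction.orbit G y0, ℂ))
      (lp.single 2 (⟨y0, MulAction.mem_orbit_self y0⟩ : MulAction.orbit G y0) (1 : ℂ)) =
      lp.single 2 (⟨y0, MulAction.mem_orbit_self y0⟩ : MulAction.orbit G y0) (1 : ℂ) from rfl,
      lp.norm_single (by norm_num)] at h2
    simp at h2
  have hP := perm_urep (G := G) (α := MulAction.orbit G y0)
  obtain ⟨F, hF, hF0⟩ := simple_state hs hP (fun a => by
    refine (hweak a).trans ?_
    rw [← toHom_coe]; rfl)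
  obtain ⟨q, hq, hq0, hqc, hqe⟩ := stateField hY hP
    {b | ∃ g : G, g ≠ 1 ∧ b = perm (α := MulAction.orbit G y0) g} (by
      rintro g _ ⟨k, hk, rfl⟩
      refine ⟨g * k * g⁻¹, by simpa using hk, ?_⟩
      rw [conjU_apply, hP.mul, hP.mul]) F hF (by
      rintro _ ⟨k, hk, rfl⟩
      exact hF0 k hk)
  have hd := restrDelta hY.1 (Subtype.val : MulAction.orbit G y0 → Y) (fun g x => rfl) q hq hqc hqe y0
  have hcl : IsClosed {y | Φ (uu s) y = 0} := isClosed_eq (by fun_prop) continuous_const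
  obtain ⟨h, hh0, hh1, -⟩ := exists_continuous_zero_one_of_isClosed hcl
    (isClosed_singleton (x := y0)) (by simpa using hne)
  have ho : cR h y0 = 1 := by
    show ((h y0 : ℝ) : ℂ) = 1
    rw [hh1 rfl]; simp
  have hz : mulY (Subtype.val : MulAction.orbit G y0 → Y) (cR h) * (perm s - 1) = 0 := by
    ext v x
    show ((h x : ℝ) : ℂ) * (v (s⁻¹ • x) - v x) = 0
    by_cases hx : Φ (uu s) x = 0
    · rw [hh0 hx]; simp
    · have : s⁻¹ • x = x := by
        rw [inv_smul_eq_iff]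
        exact Subtype.ext (hfix x hx).symm
      rw [this, sub_self, mul_zero]
  have hz2 : perm s - 1 = mulY (Subtype.val : MulAction.orbit G y0 → Y) (1 - cR h) * (perm s - 1) := by
    rw [map_sub, sub_mul, hz, mulY_one, one_mul, sub_zero]
  have h1 : q y0 (perm s - 1) = 0 := by
    rw [hz2]
    exact (multDom (hq y0) hd (f := 1 - cR h) (by simp [ho]) _).1
  rw [map_sub, (hq y0).one, hq0 y0 _ ⟨s, hs1, rfl⟩] at h1
  norm_num at h1

theorem unique_of_simple {Y : Type u} [TopologicalSpace Y] [CompactSpace Y] [T2Space Y]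
    [MulAction G Y] [ContinuousConstSMul G Y] (hY : IsFurstenberg G Y) (hs : IsCstarSimple G)
    {Φ : redCstar G →L[ℂ] C(Y, ℂ)} (hΦ : IsUCP Φ) (hE : IsEquivariant Φ) (a : redCstar G) (y : Y) :
    Φ a y = tauF G a := by
  let t : redCstar G →L[ℂ] ℂ := tauL.mkContinuous 1 (fun a => by rw [one_mul]; exact tauF_le a)
  have ht : ∀ a, t a = tauF G a := fun a => rfl
  rw [← ht]
  refine dense_toHom.induction_on (p := fun a => Φ a y = t a) a ?_ fun b => ?_
  · exact isClosed_eq ((ContinuousMap.evalCLM ℂ y).continuous.comp Φ.continuous) t.continuous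
  · induction b using MonoidAlgebra.induction_linear with
    | zero => simp
    | add a b ha hb => simp only [map_add, ContinuousMap.add_apply, ha, hb]
    | single g c =>
      rw [URep.toHom_single, map_smul, map_smul, ContinuousMap.smul_apply]
      congr 1
      rw [ht]
      by_cases hg : g = 1
      · subst hg
        rw [uu_urep.one, hΦ.1, tauF_one]; rfl
      · rw [phi_uu_zero hY hs hΦ hE hg, tauF_uu hg]

end Main

/-- A discrete group is C*-simple if and only if the only `G`-equivariant u.c.p. map
`C*_λ(G) → C(∂_F G)` is the one given by the canonical trace. -/
theorem cstarSimple_iff_unique_equivariant_ucp (G : Type u) [Group G] (Y : Type u)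
    [TopologicalSpace Y] [CompactSpace Y] [T2Space Y] [MulAction G Y] [ContinuousConstSMul G Y]
    (hY : IsFurstenberg G Y) :
    IsCstarSimple G ↔
      ∀ Φ : redCstar G →L[ℂ] C(Y, ℂ), IsUCP Φ → IsEquivariant Φ →
        ∀ (a : redCstar G) (x : Y), Φ a x = tauF G a := by
  exact ⟨fun hs Φ hΦ hE a x => unique_of_simple hY hs hΦ hE a x, fun h => simple_of_unique hY h⟩
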